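/- arXiv:1601.02271 — 3 statements merged into one kernel-verified Lean document; each statement's English description precedes it below -/
import Mathlib

section
/- For every r ≥ 2 and every n of the form n = 1 + n₁ + C(n₁, r−1)·n₁, there is an r-uniform hypergraph G on n vertices with Δ₁(G)·Δ_{r−1}(G) = Θ(n) and a globally (r+1)^r-bounded coloring of K_n^{(r)} containing no properly colored copy of G. -/
/-- The degree of a vertex set `S` in a hypergraph `G`. -/
def hdeg {V : Type*} [DecidableEq V] (G : Finset (Finset V)) (S : Finset V) : ℕ :=
  (G.filter (fun e => S ⊆ e)).card

/-- The maximum `j`-degree of a hypergraph `G`. -/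
def maxDeg {V : Type*} [Fintype V] [DecidableEq V] (G : Finset (Finset V)) (j : ℕ) : ℕ :=
  ((Finset.univ : Finset V).powersetCard j).sup (hdeg G)

namespace Hyp14

open Finset

lemma exists_struct (r n₁ n : ℕ) (hr : 2 ≤ r) (h1 : r ≤ n₁)
    (hn : n = 1 + n₁ + Nat.choose n₁ (r - 1) * n₁) :
    ∃ (L : Finset (Fin n)) (v v' : Fin n) (D : Finset (Fin n) → Finset (Fin n)),
      L.card = n₁ ∧ v ≠ v' ∧
      (∀ S ∈ L.powersetCard (r-1), n₁ ≤ (D S).card ∧ (D S).card ≤ n₁ + 2 ∧ v ∈ D S ∧ v' ∈ D S ∧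
        ∀ u ∈ D S, u ∉ L) ∧
      (∀ w, w ∉ L → ∃ S ∈ L.powersetCard (r-1), w ∈ D S) := by
  obtain ⟨L, -, hL⟩ := Finset.exists_subset_card_eq (s := (univ : Finset (Fin n))) (n := n₁)
    (by simp; omega)
  have hvex : ∃ v, v ∉ L := by
    by_contra! h
    have : L = univ := by ext; simp [h]
    rw [this] at hL
    simp at hL
    omega
  obtain ⟨v, hv⟩ := hvex
  have hW : ((insert v L)ᶜ).card = (L.powersetCard (r-1)).card * n₁ := by
    rw [card_compl, card_insert_of_notMem hv, card_powersetCard, hL]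
    simp
    omega
  have hcard : Fintype.card ((L.powersetCard (r-1) : Finset (Finset (Fin n))) × Fin n₁) =
      Fintype.card ((insert v L)ᶜ : Finset (Fin n)) := by
    rw [Fintype.card_prod, Fintype.card_coe, Fintype.card_coe, Fintype.card_fin, hW]
  have e := Fintype.equivOfCardEq hcard
  have hPne : (L.powersetCard (r-1)).Nonempty := by
    rw [powersetCard_nonempty]; omega
  obtain ⟨S0, hS0⟩ := hPne
  let v' : Fin n := (e (⟨S0, hS0⟩, ⟨0, by omega⟩)).1
  have hmem : ∀ x : ((insert v L)ᶜ : Finset (Fin n)), x.1 ≠ v ∧ x.1 ∉ L := by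
    intro x
    have := x.2
    simpa [mem_compl, mem_insert, not_or] using this
  refine ⟨L, v, v', fun S => if h : S ∈ L.powersetCard (r-1) then
    {v, v'} ∪ univ.image (fun i : Fin n₁ => (e (⟨S, h⟩, i)).1) else ∅, hL, ?_, ?_, ?_⟩
  · exact (hmem _).1.symm
  · intro S hS
    simp only [dif_pos hS]
    have hc : (univ.image (fun i : Fin n₁ => (e (⟨S, hS⟩, i)).1)).card = n₁ := by
      rw [card_image_of_injective]
      · simp
      · intro i j hij
        have := e.injective (Subtype.ext hij)
        simpa using this
    refine ⟨?_, ?_, by simp, by simp, ?_⟩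
    · conv_lhs => rw [← hc]
      exact card_le_card subset_union_right
    · refine (card_union_le _ _).trans ?_
      rw [hc]
      have := card_le_two (a := v) (b := v')
      omega
    · intro u hu
      simp only [mem_union, mem_insert, mem_singleton, mem_image, mem_univ, true_and] at hu
      rcases hu with (rfl | rfl) | ⟨i, rfl⟩
      · exact hv
      · exact (hmem _).2
      · exact (hmem _).2
  · intro w hw
    by_cases hwv : w = v
    · refine ⟨S0, hS0, ?_⟩
      simp only [dif_pos hS0]
      simp [hwv]
    · have hwW : w ∈ (insert v L)ᶜ := by simp [hwv, hw]
      obtain ⟨⟨⟨S, hS⟩, i⟩, hi⟩ := e.surjective ⟨w, hwW⟩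
      refine ⟨S, hS, ?_⟩
      simp only [dif_pos hS]
      simp only [mem_union, mem_image, mem_univ, true_and]
      exact Or.inr ⟨i, by rw [hi]⟩

def mcol {n : ℕ} (e : Finset (Fin n)) : Multiset ℕ := e.val.map (fun x => x.val / 3)

lemma mcol_insert {n : ℕ} (x : Fin n) (T : Finset (Fin n)) (h : x ∉ T) :
    mcol (insert x T) = (x.val / 3) ::ₘ mcol T := by
  simp [mcol, insert_val_of_notMem h]

lemma block_card {n : ℕ} (a : ℕ) : ((univ : Finset (Fin n)).filter (fun x => x.val / 3 = a)).card ≤ 3 := by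
  rw [← card_image_of_injective _ Fin.val_injective]
  have : ((univ : Finset (Fin n)).filter (fun x => x.val / 3 = a)).image Fin.val ⊆ Ico (3*a) (3*a+3) := by
    intro y hy
    simp only [mem_image, mem_filter, mem_univ, true_and] at hy
    obtain ⟨x, hx, rfl⟩ := hy
    simp only [mem_Ico]; omega
  exact (card_le_card this).trans (by simp)

lemma class_card {n : ℕ} (M : Multiset ℕ) :
    ((univ : Finset (Finset (Fin n))).filter (fun e => mcol e = M)).card ≤ 3 ^ M.card := by
  induction M using Multiset.induction_on with
  | empty =>
    refine (card_le_card (t := {∅}) ?_).trans (by simp)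
    intro e he
    simpa [mcol] using he
  | cons a M ih =>
    have : ((univ : Finset (Finset (Fin n))).filter (fun e => mcol e = a ::ₘ M)) ⊆
      ((univ : Finset (Fin n)).filter (fun x => x.val / 3 = a)).biUnion (fun x =>
        ((univ : Finset (Finset (Fin n))).filter (fun e => mcol e = M)).image (insert x)) := by
      intro e he
      simp only [mem_filter, mem_univ, true_and] at he
      have ha : a ∈ mcol e := by rw [he]; simp
      obtain ⟨x, hx, hxa⟩ := Multiset.mem_map.1 ha
      simp only [mem_biUnion, mem_filter, mem_univ, true_and, mem_image]
      have hxe : x ∈ e := hx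
      refine ⟨x, hxa, e.erase x, ?_, insert_erase hxe⟩
      rw [← insert_erase hxe, mcol_insert _ _ (notMem_erase x e), hxa] at he
      exact (Multiset.cons_inj_right a).1 he
    refine (card_le_card this).trans ?_
    refine (card_biUnion_le_card_mul _ _ (3 ^ M.card) ?_).trans ?_
    · intro x _
      exact card_image_le.trans ih
    · rw [Multiset.card_cons, pow_succ, mul_comm]
      exact Nat.mul_le_mul_left _ (block_card a)

lemma col_swap {n : ℕ} (f : Fin n → Fin n) (hf : Function.Injective f) (x y : Fin n)
    (T : Finset (Fin n)) (hx : x ∉ T) (hy : y ∉ T) (h : (f x).val / 3 = (f y).val / 3) :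
    mcol ((insert x T).image f) = mcol ((insert y T).image f) := by
  rw [image_insert, image_insert, mcol_insert, mcol_insert, h]
  · simpa [hf.eq_iff] using hy
  · simpa [hf.eq_iff] using hx

def GG {n : ℕ} (r : ℕ) (L : Finset (Fin n)) (D : Finset (Fin n) → Finset (Fin n)) :
    Finset (Finset (Fin n)) :=
  (L.powersetCard (r-1)).biUnion (fun S => (D S).image (fun u => insert u S))

lemma mem_GG {n : ℕ} {r : ℕ} {L : Finset (Fin n)} {D : Finset (Fin n) → Finset (Fin n)}
    {e : Finset (Fin n)} : e ∈ GG r L D ↔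
      ∃ S ∈ L.powersetCard (r-1), ∃ u ∈ D S, insert u S = e := by
  simp only [GG, mem_biUnion, mem_image]

lemma no_copy (r n₁ n : ℕ) (hr : 2 ≤ r) (h1 : r ≤ n₁)
    (L : Finset (Fin n)) (v v' : Fin n) (D : Finset (Fin n) → Finset (Fin n))
    (hL : L.card = n₁) (hvv : v ≠ v')
    (hD : ∀ S ∈ L.powersetCard (r-1), v ∈ D S ∧ v' ∈ D S ∧ ∀ u ∈ D S, u ∉ L)
    (hw : ∀ w, w ∉ L → ∃ S ∈ L.powersetCard (r-1), w ∈ D S)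
    (f : Fin n → Fin n) (hf : Function.Injective f)
    (hp : ∀ e₁ ∈ GG r L D, ∀ e₂ ∈ GG r L D, e₁ ≠ e₂ → (e₁ ∩ e₂).Nonempty →
              mcol (e₁.image f) ≠ mcol (e₂.image f)) : False := by
  -- two vertices outside L, one of which is a root
  have key1 : ∀ ρ w, (∀ S ∈ L.powersetCard (r-1), ρ ∈ D S) → w ∉ L → ρ ≠ w →
      (f ρ).val / 3 = (f w).val / 3 → False := by
    intro ρ w hρ hwL hne hq
    obtain ⟨S, hS, hwS⟩ := hw w hwL
    have hS' := mem_powersetCard.1 hS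
    have hρL : ρ ∉ L := (hD S hS).2.2 ρ (hρ S hS)
    have a1 : ρ ∉ S := fun h => hρL (hS'.1 h)
    have a2 : w ∉ S := fun h => hwL (hS'.1 h)
    refine hp (insert ρ S) (mem_GG.2 ⟨S, hS, ρ, hρ S hS, rfl⟩) (insert w S)
      (mem_GG.2 ⟨S, hS, w, hwS, rfl⟩) ?_ ?_ (col_swap f hf ρ w S a1 a2 hq)
    · intro h
      have : ρ ∈ insert w S := h ▸ mem_insert_self _ _
      rcases mem_insert.1 this with h | h
      · exact hne h
      · exact a1 h
    · have : S.Nonempty := by rw [← card_pos]; omega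
      obtain ⟨s, hs⟩ := this
      exact ⟨s, by simp [hs]⟩
  have key2 : ∀ ρ w₁ w₂, (∀ S ∈ L.powersetCard (r-1), ρ ∈ D S) → w₁ ∈ L → w₂ ∈ L → w₁ ≠ w₂ →
      (f w₁).val / 3 = (f w₂).val / 3 → False := by
    intro ρ w₁ w₂ hρ hw1 hw2 hne hq
    have hc : r - 2 ≤ ((L.erase w₁).erase w₂).card := by
      rw [card_erase_of_mem (by simp [hw2, hne.symm]), card_erase_of_mem hw1]; omega
    obtain ⟨T, hT, hTc⟩ := exists_subset_card_eq hc
    have t1 : w₁ ∉ T := fun h => by simpa using hT h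
    have t2 : w₂ ∉ T := fun h => by simpa using hT h
    have tL : T ⊆ L := fun x h => by
      have := hT h
      simp only [mem_erase] at this
      exact this.2.2
    have hS : ∀ w ∈ L, w ∉ T → insert w T ∈ L.powersetCard (r-1) := by
      intro w hw hwT
      rw [mem_powersetCard, card_insert_of_notMem hwT, hTc]
      exact ⟨insert_subset hw tL, by omega⟩
    have s1 := hS w₁ hw1 t1
    have s2 := hS w₂ hw2 t2
    have hρL : ρ ∉ L := (hD _ s1).2.2 ρ (hρ _ s1)
    have n1 : w₁ ≠ ρ := fun h => hρL (h ▸ hw1)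
    have n2 : w₂ ≠ ρ := fun h => hρL (h ▸ hw2)
    have u1 : w₁ ∉ insert ρ T := by simp [n1, t1]
    have u2 : w₂ ∉ insert ρ T := by simp [n2, t2]
    refine hp (insert w₁ (insert ρ T)) (mem_GG.2 ⟨_, s1, ρ, hρ _ s1, insert_comm _ _ _⟩)
      (insert w₂ (insert ρ T)) (mem_GG.2 ⟨_, s2, ρ, hρ _ s2, insert_comm _ _ _⟩) ?_ ?_
      (col_swap f hf w₁ w₂ _ u1 u2 hq)
    · intro h
      have : w₁ ∈ insert w₂ (insert ρ T) := h ▸ mem_insert_self _ _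
      rcases mem_insert.1 this with h | h
      · exact hne h
      · exact u1 h
    · exact ⟨ρ, by simp⟩
  have hsurj : Function.Surjective f := Finite.surjective_of_injective hf
  have full : ∀ ρ, (∀ S ∈ L.powersetCard (r-1), ρ ∈ D S) → n ≤ 3 * ((f ρ).val / 3) + 2 := by
    intro ρ hρ
    by_contra! hlt
    have hex : ∃ y₁ y₂ : Fin n, y₁ ≠ y₂ ∧ y₁ ≠ f ρ ∧ y₂ ≠ f ρ ∧
        y₁.val / 3 = (f ρ).val / 3 ∧ y₂.val / 3 = (f ρ).val / 3 := by
      have h3 : (f ρ).val % 3 = 0 ∨ (f ρ).val % 3 = 1 ∨ (f ρ).val % 3 = 2 := by omega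
      simp only [Fin.ext_iff, ne_eq]
      rcases h3 with h | h | h
      · exact ⟨⟨3 * ((f ρ).val / 3) + 1, by omega⟩, ⟨3 * ((f ρ).val / 3) + 2, by omega⟩,
          by simp, by simp; omega, by simp; omega, by simp; omega, by simp; omega⟩
      · exact ⟨⟨3 * ((f ρ).val / 3), by omega⟩, ⟨3 * ((f ρ).val / 3) + 2, by omega⟩,
          by simp, by simp; omega, by simp; omega, by simp, by simp; omega⟩
      · exact ⟨⟨3 * ((f ρ).val / 3), by omega⟩, ⟨3 * ((f ρ).val / 3) + 1, by omega⟩,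
          by simp, by simp; omega, by simp; omega, by simp, by simp; omega⟩
    obtain ⟨y₁, y₂, h12, hy1, hy2, q1, q2⟩ := hex
    obtain ⟨w₁, rfl⟩ := hsurj y₁
    obtain ⟨w₂, rfl⟩ := hsurj y₂
    by_cases m1 : w₁ ∈ L
    · by_cases m2 : w₂ ∈ L
      · exact key2 ρ w₁ w₂ hρ m1 m2 (fun h => h12 (h ▸ rfl)) (q1.trans q2.symm)
      · exact key1 ρ w₂ hρ m2 (fun h => hy2 (h ▸ rfl)) q2.symm
    · exact key1 ρ w₁ hρ m1 (fun h => hy1 (h ▸ rfl)) q1.symm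
  have hv : ∀ S ∈ L.powersetCard (r-1), v ∈ D S := fun S hS => (hD S hS).1
  have hv' : ∀ S ∈ L.powersetCard (r-1), v' ∈ D S := fun S hS => (hD S hS).2.1
  have f1 := full v hv
  have f2 := full v' hv'
  have hv'L : v' ∉ L := by
    obtain ⟨S, hS⟩ : (L.powersetCard (r-1)).Nonempty := by rw [powersetCard_nonempty]; omega
    exact (hD S hS).2.2 _ (hv' S hS)
  refine key1 v v' hv hv'L hvv ?_
  have := (f v).isLt
  have := (f v').isLt
  omega

lemma card_through {n : ℕ} (k : ℕ) (L : Finset (Fin n)) (x : Fin n) (hx : x ∈ L) :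
    ((L.powersetCard (k+1)).filter (fun S => x ∈ S)).card ≤ (L.card - 1).choose k := by
  have : ((L.powersetCard (k+1)).filter (fun S => x ∈ S)) ⊆
      ((L.erase x).powersetCard k).image (insert x) := by
    intro S hS
    simp only [mem_filter, mem_powersetCard] at hS
    simp only [mem_image, mem_powersetCard]
    refine ⟨S.erase x, ⟨erase_subset_erase _ hS.1.1, ?_⟩, insert_erase hS.2⟩
    rw [card_erase_of_mem hS.2]; omega
  refine (card_le_card this).trans (card_image_le.trans ?_)
  rw [card_powersetCard, card_erase_of_mem hx]

lemma deg_bounds (r n₁ n : ℕ) (hr : 2 ≤ r) (h1 : r ≤ n₁)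
    (L : Finset (Fin n)) (v : Fin n) (D : Finset (Fin n) → Finset (Fin n))
    (hL : L.card = n₁)
    (hD : ∀ S ∈ L.powersetCard (r-1), n₁ ≤ (D S).card ∧ (D S).card ≤ n₁ + 2 ∧ v ∈ D S ∧
        ∀ u ∈ D S, u ∉ L) :
    n₁.choose (r-1) ≤ maxDeg (GG r L D) 1 ∧ maxDeg (GG r L D) 1 ≤ 3 * r * n₁.choose (r-1) ∧
    n₁ ≤ maxDeg (GG r L D) (r-1) ∧ maxDeg (GG r L D) (r-1) ≤ 4 * n₁ := by
  obtain ⟨S0, hS0⟩ : (L.powersetCard (r-1)).Nonempty := by rw [powersetCard_nonempty]; omega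
  have hvL : v ∉ L := (hD S0 hS0).2.2.2 v (hD S0 hS0).2.2.1
  refine ⟨?_, ?_, ?_, ?_⟩
  · have hle : hdeg (GG r L D) {v} ≤ maxDeg (GG r L D) 1 :=
      Finset.le_sup (f := hdeg (GG r L D)) (by simp [mem_powersetCard])
    refine le_trans ?_ hle
    rw [← hL, ← card_powersetCard]
    refine card_le_card_of_injOn (insert v) ?_ ?_
    · intro S hS
      have hS : S ∈ L.powersetCard (r-1) := hS
      simp only [coe_filter, Set.mem_setOf_eq]
      exact ⟨mem_GG.2 ⟨S, hS, v, (hD S hS).2.2.1, rfl⟩, by simp⟩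
    · intro S hS T hT h
      have a : ∀ S ∈ L.powersetCard (r-1), v ∉ S := fun S hS hv =>
        hvL ((mem_powersetCard.1 hS).1 hv)
      have h : insert v S = insert v T := h
      rw [← erase_insert (a S hS), h, erase_insert (a T hT)]
  · refine Finset.sup_le ?_
    intro X hX
    obtain ⟨x, rfl⟩ := card_eq_one.1 (mem_powersetCard.1 hX).2
    unfold hdeg
    by_cases hx : x ∈ L
    · have hsub : (GG r L D).filter (fun e => {x} ⊆ e) ⊆
          ((L.powersetCard (r-1)).filter (fun S => x ∈ S)).biUnion
            (fun S => (D S).image (fun u => insert u S)) := by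
        intro e he
        simp only [mem_filter, singleton_subset_iff] at he
        obtain ⟨S, hS, u, hu, rfl⟩ := mem_GG.1 he.1
        have hne : x ≠ u := fun h => (hD S hS).2.2.2 u hu (h ▸ hx)
        have hxS : x ∈ S := by simpa [hne] using he.2
        simp only [mem_biUnion, mem_filter, mem_image]
        exact ⟨S, ⟨hS, hxS⟩, u, hu, rfl⟩
      refine (card_le_card hsub).trans ?_
      refine (card_biUnion_le_card_mul _ _ (n₁ + 2) ?_).trans ?_
      · intro S hS
        exact card_image_le.trans (hD S (mem_filter.1 hS).1).2.1
      · obtain ⟨k, rfl⟩ : ∃ k, r = k + 2 := ⟨r - 2, by omega⟩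
        obtain ⟨m, rfl⟩ : ∃ m, n₁ = m + 1 := ⟨n₁ - 1, by omega⟩
        have h2 := card_through k L x hx
        rw [hL] at h2
        simp only [Nat.add_sub_cancel] at h2
        have h3 := Nat.add_one_mul_choose_eq m k
        have e1 : k + 2 - 1 = k + 1 := by omega
        rw [e1]
        calc _ ≤ m.choose k * (m + 1 + 2) := Nat.mul_le_mul_right _ h2
          _ ≤ 3 * ((m+1) * m.choose k) := by nlinarith [Nat.zero_le (m * m.choose k)]
          _ = 3 * ((m+1).choose (k+1) * (k+1)) := by rw [h3]
          _ ≤ 3 * (k+2) * (m+1).choose (k+1) := by nlinarith [Nat.zero_le ((m+1).choose (k+1))]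
    · have hsub : (GG r L D).filter (fun e => {x} ⊆ e) ⊆
          (L.powersetCard (r-1)).image (insert x) := by
        intro e he
        simp only [mem_filter, singleton_subset_iff] at he
        obtain ⟨S, hS, u, hu, rfl⟩ := mem_GG.1 he.1
        rcases mem_insert.1 he.2 with h | h
        · exact mem_image.2 ⟨S, hS, by rw [h]⟩
        · exact absurd ((mem_powersetCard.1 hS).1 h) hx
      refine (card_le_card hsub).trans (card_image_le.trans ?_)
      rw [card_powersetCard, hL]
      exact Nat.le_mul_of_pos_left _ (by omega)
  · have hle : hdeg (GG r L D) S0 ≤ maxDeg (GG r L D) (r-1) :=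
      Finset.le_sup (f := hdeg (GG r L D))
        (by simp [mem_powersetCard, (mem_powersetCard.1 hS0).2])
    refine le_trans ((hD S0 hS0).1.trans ?_) hle
    refine card_le_card_of_injOn (fun u => insert u S0) ?_ ?_
    · intro u hu
      simp only [coe_filter, Set.mem_setOf_eq]
      exact ⟨mem_GG.2 ⟨S0, hS0, u, hu, rfl⟩, subset_insert _ _⟩
    · intro u hu w hw h
      have h : insert u S0 = insert w S0 := h
      have hm : u ∈ insert w S0 := h ▸ mem_insert_self _ _
      rcases mem_insert.1 hm with h | h
      · exact h
      · exact absurd ((mem_powersetCard.1 hS0).1 h) ((hD S0 hS0).2.2.2 u hu)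
  · refine Finset.sup_le ?_
    intro T hT
    have hTc := (mem_powersetCard.1 hT).2
    unfold hdeg
    have hsub : (GG r L D).filter (fun e => T ⊆ e) ⊆
        (L ∪ (if T ∈ L.powersetCard (r-1) then D T else ∅)).image (fun x => insert x T) := by
      intro e he
      simp only [mem_filter] at he
      obtain ⟨S, hS, u, hu, rfl⟩ := mem_GG.1 he.1
      have hS' := mem_powersetCard.1 hS
      have huS : u ∉ S := fun h => (hD S hS).2.2.2 u hu (hS'.1 h)
      have hcard : (insert u S).card = r - 1 + 1 := by rw [card_insert_of_notMem huS, hS'.2]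
      by_cases huT : u ∈ T
      · have : ∃ x ∈ insert u S, x ∉ T := by
          by_contra! h
          have := card_le_card (show insert u S ⊆ T from h)
          omega
        obtain ⟨x, hx, hxT⟩ := this
        have hxS : x ∈ S := by
          rcases mem_insert.1 hx with h | h
          · exact absurd huT (h ▸ hxT)
          · exact h
        refine mem_image.2 ⟨x, mem_union_left _ (hS'.1 hxS), ?_⟩
        refine eq_of_subset_of_card_le (insert_subset hx he.2) ?_
        rw [hcard, card_insert_of_notMem hxT, hTc]
      · have hTS : T ⊆ S := by
          intro y hy
          rcases mem_insert.1 (he.2 hy) with h | h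
          · exact absurd hy (h ▸ huT)
          · exact h
        have : T = S := eq_of_subset_of_card_le hTS (by omega)
        subst this
        refine mem_image.2 ⟨u, mem_union_right _ ?_, rfl⟩
        rw [if_pos hS]; exact hu
    refine (card_le_card hsub).trans (card_image_le.trans ((card_union_le _ _).trans ?_))
    split_ifs with h
    · have := (hD T h).2.1
      omega
    · simp; omega

end Hyp14

theorem stmt14 (r : ℕ) (hr : 2 ≤ r) :
    ∃ c₁ c₂ : ℚ, 0 < c₁ ∧ 0 < c₂ ∧ ∀ n₁ : ℕ, r ≤ n₁ → ∀ n : ℕ,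
      n = 1 + n₁ + Nat.choose n₁ (r - 1) * n₁ →
      ∃ G : Finset (Finset (Fin n)),
        (∀ e ∈ G, e.card = r) ∧
        c₁ * n ≤ ((maxDeg G 1 * maxDeg G (r - 1) : ℕ) : ℚ) ∧
        ((maxDeg G 1 * maxDeg G (r - 1) : ℕ) : ℚ) ≤ c₂ * n ∧
        ∃ col : Finset (Fin n) → ℕ,
          (∀ k : ℕ, (((Finset.univ : Finset (Fin n)).powersetCard r).filter
              (fun e => col e = k)).card ≤ (r + 1) ^ r) ∧
          ¬ ∃ f : Fin n → Fin n, Function.Injective f ∧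
            ∀ e₁ ∈ G, ∀ e₂ ∈ G, e₁ ≠ e₂ → (e₁ ∩ e₂).Nonempty →
              col (e₁.image f) ≠ col (e₂.image f) := by
  refine ⟨1/3, 12 * r, by norm_num, by positivity, ?_⟩
  intro n₁ h1 n hn
  obtain ⟨L, v, v', D, hL, hvv, hD, hw⟩ := Hyp14.exists_struct r n₁ n hr h1 hn
  obtain ⟨b1, b2, b3, b4⟩ := Hyp14.deg_bounds r n₁ n hr h1 L v D hL
    (fun S hS => ⟨(hD S hS).1, (hD S hS).2.1, (hD S hS).2.2.1, (hD S hS).2.2.2.2⟩)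
  have hC : 1 ≤ n₁.choose (r-1) := Nat.choose_pos (by omega)
  refine ⟨Hyp14.GG r L D, ?_, ?_, ?_, fun e => Encodable.encode (Hyp14.mcol e), ?_, ?_⟩
  · intro e he
    obtain ⟨S, hS, u, hu, rfl⟩ := Hyp14.mem_GG.1 he
    have hS' := Finset.mem_powersetCard.1 hS
    have huS : u ∉ S := fun h => (hD S hS).2.2.2.2 u hu (hS'.1 h)
    rw [Finset.card_insert_of_notMem huS, hS'.2]; omega
  · have h := Nat.mul_le_mul b1 b3
    have h' : n ≤ 3 * (maxDeg (Hyp14.GG r L D) 1 * maxDeg (Hyp14.GG r L D) (r - 1)) := by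
      have : n₁ ≤ n₁.choose (r-1) * n₁ := Nat.le_mul_of_pos_left _ hC
      omega
    have h'' : (n : ℚ) ≤ 3 * ((maxDeg (Hyp14.GG r L D) 1 * maxDeg (Hyp14.GG r L D) (r - 1) : ℕ) : ℚ) := by
      exact_mod_cast h'
    linarith
  · have h := Nat.mul_le_mul b2 b4
    have h' : maxDeg (Hyp14.GG r L D) 1 * maxDeg (Hyp14.GG r L D) (r - 1) ≤ 12 * r * n := by
      refine h.trans ?_
      have : n₁.choose (r-1) * n₁ ≤ n := by omega
      calc _ = 12 * r * (n₁.choose (r-1) * n₁) := by ring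
        _ ≤ _ := Nat.mul_le_mul_left _ this
    exact_mod_cast h'
  · intro k
    rcases Finset.eq_empty_or_nonempty (((Finset.univ : Finset (Fin n)).powersetCard r).filter
              (fun e => Encodable.encode (Hyp14.mcol e) = k)) with h | ⟨e0, he0⟩
    · rw [h]; simp
    · rw [Finset.mem_filter, Finset.mem_powersetCard] at he0
      have hc : (Hyp14.mcol e0).card = r := by
        simpa [Hyp14.mcol] using he0.1.2
      have h2 := Hyp14.class_card (n := n) (Hyp14.mcol e0)
      rw [hc] at h2
      refine (Finset.card_le_card ?_).trans (h2.trans (Nat.pow_le_pow_left (by omega) r))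
      intro e he
      rw [Finset.mem_filter] at he
      simp only [Finset.mem_filter, Finset.mem_univ, true_and]
      exact Encodable.encode_injective (he.2.trans he0.2.symm)
  · rintro ⟨f, hf, hp⟩
    refine Hyp14.no_copy r n₁ n hr h1 L v v' D hL hvv
      (fun S hS => (hD S hS).2.2) hw f hf ?_
    intro e₁ he₁ e₂ he₂ hne hov h
    exact hp e₁ he₁ e₂ he₂ hne hov (congrArg Encodable.encode h)
end

section
/- Let m ≥ 2, let q ≥ m be a prime power, and let n ≥ 3q². There exists an m-partite graph G, with at most 3q² vertices in each part and maximum degree at most q + 2m, and a globally ⌈n/(q²+q)⌉-bounded edge-coloring of the complete m-partite graph K_{m⊗n} that contains no properly colored copy of G. -/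
open Configuration in
theorem plane_exists (q : ℕ) (hq : IsPrimePow q) :
    ∃ I : Fin (q^2+q+1) → Fin (q^2+q+1) → Prop, (∀ i j, I i j → I j i) ∧
      (∀ i i', i ≠ i' → ∃ j, I i j ∧ I i' j) ∧ (∀ i, {j | I i j}.ncard ≤ q + 1) := by
  classical
  obtain ⟨p, k, hp, hk, rfl⟩ := hq
  have : Fact p.Prime := ⟨hp.nat_prime⟩
  let K := GaloisField p k
  let P := Projectivization K (Fin 3 → K)
  have : Finite K := inferInstance
  have : Finite P := inferInstance
  letI : Fintype P := Fintype.ofFinite P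
  have hK : Nat.card K = p ^ k := GaloisField.card p k hk.ne'
  have hc : Nat.card P = (p^k)^2 + p^k + 1 := by
    have := Projectivization.card_of_finrank K (Fin 3 → K) (n := 3) (by simp)
    rw [this, hK]; simp [Finset.sum_range_succ]; ring
  have ho : Configuration.ProjectivePlane.order P P = p ^ k := by
    have := Configuration.ProjectivePlane.card_points P P
    rw [← Nat.card_eq_fintype_card, hc] at this
    rcases lt_trichotomy (Configuration.ProjectivePlane.order P P) (p^k) with h | h | h
    · nlinarith
    · exact h
    · nlinarith
  have e : Fin ((p^k)^2 + p^k + 1) ≃ P := (Finite.equivFinOfCardEq hc).symm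
  refine ⟨fun i j => Projectivization.orthogonal (e i) (e j), ?_, ?_, ?_⟩
  · intro i j h
    exact Projectivization.orthogonal_comm.1 h
  · intro i i' h
    have h' : e i ≠ e i' := fun hh => h (e.injective hh)
    have := Configuration.HasLines.mkLine_ax (P := P) (L := P) h'
    refine ⟨e.symm (Configuration.HasLines.mkLine (P := P) (L := P) h'), ?_⟩
    simp only [Equiv.apply_symm_apply]
    exact this
  · intro i
    have h1 := Configuration.ProjectivePlane.lineCount_eq (P := P) (L := P) (e i)
    rw [ho, Configuration.lineCount] at h1
    rw [← h1]
    change _ ≤ Nat.card ({l : P | e i ∈ l} : Set P)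
    rw [Nat.card_coe_set_eq]
    apply Set.ncard_le_ncard_of_injOn e
    · intro j hj; exact hj
    · exact e.injective.injOn

def stAdj {N h m' : ℕ} (I : Fin N → Fin N → Prop) :
    Bool × (Fin N ⊕ (Fin h × Fin m')) → Bool × (Fin N ⊕ (Fin h × Fin m')) → Prop
  | (b, Sum.inl i), (b', Sum.inl j) => b ≠ b' ∧ I i j
  | (b, Sum.inl i), (b', Sum.inr (j, _)) => b = b' ∧ 2 * j.1 ≤ i.1 ∧ i.1 ≤ 2 * j.1 + 2
  | (b, Sum.inr (j, _)), (b', Sum.inl i) => b = b' ∧ 2 * j.1 ≤ i.1 ∧ i.1 ≤ 2 * j.1 + 2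
  | (b, Sum.inr (j, s)), (b', Sum.inr (j', s')) => b = b' ∧ j = j' ∧ s ≠ s'

def stPt {m' : ℕ} (hm : 1 ≤ m') (b : Bool) : Fin (m'+1) :=
  if b then ⟨1, by omega⟩ else ⟨0, by omega⟩

theorem stPt_ne {m' : ℕ} (hm : 1 ≤ m') {b b' : Bool} (h : b ≠ b') : stPt hm b ≠ stPt hm b' := by
  cases b <;> cases b' <;> simp_all [stPt]

def stPart {N h m' : ℕ} (hm : 1 ≤ m') : Bool × (Fin N ⊕ (Fin h × Fin m')) → Fin (m'+1)
  | (b, Sum.inl _) => stPt hm b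
  | (b, Sum.inr (_, s)) => (stPt hm b).succAbove s

theorem stPart_adj {N h m' : ℕ} (hm : 1 ≤ m') (I : Fin N → Fin N → Prop) :
    ∀ u v : Bool × (Fin N ⊕ (Fin h × Fin m')), stAdj I u v → stPart hm u ≠ stPart hm v := by
  rintro ⟨b, i | ⟨j, s⟩⟩ ⟨b', i' | ⟨j', s'⟩⟩ h
  · exact stPt_ne hm h.1
  · obtain ⟨rfl, -⟩ := h
    exact (Fin.succAbove_ne _ _).symm
  · obtain ⟨rfl, -⟩ := h
    exact (Fin.succAbove_ne _ _)
  · obtain ⟨rfl, -, h⟩ := h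
    exact fun h' => h (Fin.succAbove_right_injective h')

theorem stPart_half {N h m' : ℕ} (hm : 1 ≤ m') (a : Fin (m'+1)) (b : Bool) :
    {x : Bool × (Fin N ⊕ (Fin h × Fin m')) | x.1 = b ∧ stPart hm x = a}.ncard
      ≤ if stPt hm b = a then N else h := by
  split_ifs with hb
  · calc _ ≤ ((fun i : Fin N => ((b, Sum.inl i) : Bool × (Fin N ⊕ (Fin h × Fin m')))) '' Set.univ).ncard := by
          apply Set.ncard_le_ncard _ (Set.toFinite _)
          rintro ⟨b', i | ⟨j, s⟩⟩ ⟨h1, h2⟩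
          · simp at h1; subst h1; exact ⟨i, trivial, rfl⟩
          · simp at h1; subst h1
            exact absurd (h2.trans hb.symm) (Fin.succAbove_ne _ _)
      _ ≤ N := by
          refine (Set.ncard_image_le (Set.toFinite _)).trans ?_
          simp [Set.ncard_univ]
  · obtain ⟨s, hs⟩ := Fin.exists_succAbove_eq (Ne.symm hb)
    calc _ ≤ ((fun i : Fin h => ((b, Sum.inr (i, s)) : Bool × (Fin N ⊕ (Fin h × Fin m')))) '' Set.univ).ncard := by
          apply Set.ncard_le_ncard _ (Set.toFinite _)
          rintro ⟨b', i | ⟨j, s'⟩⟩ ⟨h1, h2⟩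
          · simp at h1; subst h1
            exact absurd h2 hb
          · simp at h1; subst h1
            have : s' = s := Fin.succAbove_right_injective (h2.trans hs.symm)
            subst this
            exact ⟨j, trivial, rfl⟩
      _ ≤ h := by
          refine (Set.ncard_image_le (Set.toFinite _)).trans ?_
          simp [Set.ncard_univ]

theorem stPart_card {N h m' : ℕ} (hm : 1 ≤ m') (hN : h ≤ N) (a : Fin (m'+1)) :
    ((stPart (N := N) (h := h) hm) ⁻¹' {a}).ncard ≤ N + h := by
  have h0 := stPart_half (N := N) (h := h) hm a false
  have h1 := stPart_half (N := N) (h := h) hm a true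
  have hne := stPt_ne hm (show false ≠ true by simp)
  have : (stPart (N := N) (h := h) hm) ⁻¹' {a} ⊆
      {x | x.1 = false ∧ stPart hm x = a} ∪ {x | x.1 = true ∧ stPart hm x = a} := by
    rintro ⟨b, x⟩ hx
    cases b
    · left; exact ⟨rfl, hx⟩
    · right; exact ⟨rfl, hx⟩
  have h2 := (Set.ncard_le_ncard this (Set.toFinite _)).trans (Set.ncard_union_le _ _)
  split_ifs at h0 h1 with ha hb
  · exact absurd (ha.trans hb.symm) hne
  all_goals omega

theorem stDeg {N h m' q : ℕ} (hm : 1 ≤ m') (I : Fin N → Fin N → Prop)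
    (hI : ∀ i, {j | I i j}.ncard ≤ q + 1) (hq : 2 ≤ q) (v : Bool × (Fin N ⊕ (Fin h × Fin m'))) :
    {w | stAdj I v w}.ncard ≤ q + 2 * (m' + 1) := by
  obtain ⟨b, i | ⟨j, s⟩⟩ := v
  · have hsub : {w | stAdj I ((b, Sum.inl i) : Bool × (Fin N ⊕ (Fin h × Fin m'))) w} ⊆
        (fun j => (!b, Sum.inl j)) '' {j | I i j} ∪
        (fun x => (b, Sum.inr x)) '' ({j : Fin h | 2 * j.1 ≤ i.1 ∧ i.1 ≤ 2 * j.1 + 2} ×ˢ Set.univ) := by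
      rintro ⟨b', i' | ⟨j', s'⟩⟩ hw
      · left
        refine ⟨i', hw.2, ?_⟩
        have := hw.1
        cases b <;> cases b' <;> simp_all
      · right
        obtain ⟨rfl, hw⟩ := hw
        exact ⟨(j', s'), ⟨hw, trivial⟩, rfl⟩
    have h2 := (Set.ncard_le_ncard hsub (Set.toFinite _)).trans (Set.ncard_union_le _ _)
    have h3 := Set.ncard_image_le (f := fun j => ((!b, Sum.inl j) : Bool × (Fin N ⊕ (Fin h × Fin m'))))
      (Set.toFinite {j | I i j})
    have h4 := Set.ncard_image_le (f := fun x => ((b, Sum.inr x) : Bool × (Fin N ⊕ (Fin h × Fin m'))))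
      (Set.toFinite ({j : Fin h | 2 * j.1 ≤ i.1 ∧ i.1 ≤ 2 * j.1 + 2} ×ˢ Set.univ))
    rw [Set.ncard_prod, Set.ncard_univ, Nat.card_fin] at h4
    have h5 : {j : Fin h | 2 * j.1 ≤ i.1 ∧ i.1 ≤ 2 * j.1 + 2}.ncard ≤ 2 := by
      have : ({i.1 / 2, i.1 / 2 - 1} : Set ℕ).ncard ≤ 2 := by
        refine (Set.ncard_insert_le _ _).trans ?_
        simp
      refine le_trans (Set.ncard_le_ncard_of_injOn (fun j => j.1) ?_ ?_ (Set.toFinite _)) this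
      · rintro j ⟨h1, h2⟩
        simp only [Set.mem_insert_iff, Set.mem_singleton_iff]
        omega
      · exact Fin.val_injective.injOn
    have h6 := hI i
    have h7 := Nat.mul_le_mul_right m' h5
    omega
  · have hsub : {w | stAdj I ((b, Sum.inr (j, s)) : Bool × (Fin N ⊕ (Fin h × Fin m'))) w} ⊆
        (fun i => (b, Sum.inl i)) '' {i : Fin N | 2 * j.1 ≤ i.1 ∧ i.1 ≤ 2 * j.1 + 2} ∪
        (fun x => (b, Sum.inr (j, x))) '' Set.univ := by
      rintro ⟨b', i' | ⟨j', s'⟩⟩ hw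
      · left
        obtain ⟨rfl, hw⟩ := hw
        exact ⟨i', hw, rfl⟩
      · right
        obtain ⟨rfl, rfl, hw⟩ := hw
        exact ⟨s', trivial, rfl⟩
    have h2 := (Set.ncard_le_ncard hsub (Set.toFinite _)).trans (Set.ncard_union_le _ _)
    have h3 := Set.ncard_image_le (f := fun i => ((b, Sum.inl i) : Bool × (Fin N ⊕ (Fin h × Fin m'))))
      (Set.toFinite {i : Fin N | 2 * j.1 ≤ i.1 ∧ i.1 ≤ 2 * j.1 + 2})
    have h4 := Set.ncard_image_le (f := fun x => ((b, Sum.inr (j, x)) : Bool × (Fin N ⊕ (Fin h × Fin m'))))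
      (Set.toFinite Set.univ)
    rw [Set.ncard_univ, Nat.card_fin] at h4
    have h5 : {i : Fin N | 2 * j.1 ≤ i.1 ∧ i.1 ≤ 2 * j.1 + 2}.ncard ≤ 3 := by
      have : (Set.Icc (2 * j.1) (2 * j.1 + 2)).ncard ≤ 3 := by
        rw [← Finset.coe_Icc, Set.ncard_coe_finset]; simp; omega
      refine le_trans (Set.ncard_le_ncard_of_injOn (fun j => j.1) ?_ ?_ (Set.toFinite _)) this
      · rintro j hj
        exact hj
      · exact Fin.val_injective.injOn
    omega

theorem stSame {N h m' n : ℕ} (hh : h = N / 2) (I : Fin N → Fin N → Prop)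
    (f : Bool × (Fin N ⊕ (Fin h × Fin m')) → Fin (m'+1) × Fin n)
    (hf : ∀ u v, stAdj I u v → (f u).1 ≠ (f v).1) (b : Bool) :
    ∀ i i' : Fin N, (f (b, Sum.inl i)).1 = (f (b, Sum.inl i')).1 := by
  have step : ∀ (t : ℕ) (ht : t + 1 < N),
      (f (b, Sum.inl ⟨t, by omega⟩)).1 = (f (b, Sum.inl ⟨t+1, ht⟩)).1 := by
    intro t ht
    let j : Fin h := ⟨t / 2, by omega⟩
    let g : Fin m' → Fin (m'+1) := fun s => (f (b, Sum.inr (j, s))).1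
    have hg : Function.Injective g := by
      intro s s' hss
      by_contra hne
      exact hf (b, Sum.inr (j, s)) (b, Sum.inr (j, s')) ⟨rfl, rfl, hne⟩ hss
    have hA : ∀ i : Fin N, 2 * j.1 ≤ i.1 → i.1 ≤ 2 * j.1 + 2 →
        (f (b, Sum.inl i)).1 ∈ (Finset.univ.image g)ᶜ := by
      intro i h1 h2
      simp only [Finset.mem_compl, Finset.mem_image, Finset.mem_univ, true_and, not_exists]
      intro s hs
      exact hf (b, Sum.inr (j, s)) (b, Sum.inl i) ⟨rfl, h1, h2⟩ hs
    have hcard : ((Finset.univ.image g)ᶜ).card ≤ 1 := by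
      rw [Finset.card_compl, Finset.card_image_of_injective _ hg]; simp
    refine Finset.card_le_one.1 hcard _ (hA _ ?_ ?_) _ (hA _ ?_ ?_) <;> simp only [j] <;> omega
  have all : ∀ (t : ℕ) (ht : t < N),
      (f (b, Sum.inl ⟨t, ht⟩)).1 = (f (b, Sum.inl ⟨0, by omega⟩)).1 := by
    intro t
    induction t with
    | zero => intro _; rfl
    | succ t ih => intro ht; rw [← step t ht]; exact ih (by omega)
  intro i i'
  exact (all i.1 i.2).trans (all i'.1 i'.2).symm

def stCol {m n : ℕ} (k : ℕ) (v w : Fin m × Fin n) : ℕ :=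
  if v.1 < w.1 then Encodable.encode (v, w.1, w.2.1 / k)
  else if w.1 < v.1 then Encodable.encode (w, v.1, v.2.1 / k) else 0

theorem stCol_symm {m n : ℕ} (k : ℕ) (v w : Fin m × Fin n) : stCol k v w = stCol k w v := by
  unfold stCol
  split_ifs with h1 h2
  · exact absurd (h1.trans h2) (lt_irrefl _)
  all_goals rfl

theorem stCol_half {m n : ℕ} (k : ℕ) (hk : 0 < k) (col : ℕ) :
    (Finset.univ.filter (fun e : (Fin m × Fin n) × (Fin m × Fin n) =>
      e.1.1 < e.2.1 ∧ stCol k e.1 e.2 = col)).card ≤ k := by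
  refine le_trans ?_ (Finset.card_range k).le
  refine Finset.card_le_card_of_injOn (fun e => e.2.2.1 % k) ?_ ?_
  · intro e _
    simpa using Nat.mod_lt _ hk
  · rintro ⟨v, w⟩ h ⟨v', w'⟩ h' hmod
    simp only [Finset.coe_filter, Finset.mem_univ, true_and, Set.mem_ofPred_eq] at h h'
    obtain ⟨h1, h2⟩ := h
    obtain ⟨h1', h2'⟩ := h'
    rw [stCol, if_pos h1] at h2
    rw [stCol, if_pos h1'] at h2'
    have := Encodable.encode_injective (h2.trans h2'.symm)
    simp only [Prod.mk.injEq] at this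
    obtain ⟨rfl, h3, h4⟩ := this
    have : w.2 = w'.2 := by
      apply Fin.ext
      have hmod' : w.2.1 % k = w'.2.1 % k := hmod
      rw [← Nat.div_add_mod w.2.1 k, ← Nat.div_add_mod w'.2.1 k, h4, hmod']
    rw [Prod.ext h3 this]

theorem stCol_card {m n : ℕ} (k : ℕ) (hk : 0 < k) (col : ℕ) :
    (Finset.univ.filter (fun e : (Fin m × Fin n) × (Fin m × Fin n) =>
      e.1.1 ≠ e.2.1 ∧ stCol k e.1 e.2 = col)).card ≤ 2 * k := by
  classical
  have h1 := stCol_half (m := m) (n := n) k hk col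
  set S := (Finset.univ.filter (fun e : (Fin m × Fin n) × (Fin m × Fin n) =>
      e.1.1 < e.2.1 ∧ stCol k e.1 e.2 = col)) with hS
  have h2 : (S.image Prod.swap).card ≤ k := Finset.card_image_le.trans h1
  have hsub : (Finset.univ.filter (fun e : (Fin m × Fin n) × (Fin m × Fin n) =>
      e.1.1 ≠ e.2.1 ∧ stCol k e.1 e.2 = col)) ⊆ S ∪ S.image Prod.swap := by
    rintro ⟨v, w⟩ h
    simp only [Finset.mem_filter, Finset.mem_univ, true_and] at h
    rw [Finset.mem_union]
    rcases lt_or_gt_of_ne h.1 with hlt | hlt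
    · left
      simp only [hS, Finset.mem_filter, Finset.mem_univ, true_and]
      exact ⟨hlt, h.2⟩
    · right
      rw [Finset.mem_image]
      refine ⟨(w, v), ?_, rfl⟩
      simp only [hS, Finset.mem_filter, Finset.mem_univ, true_and]
      exact ⟨hlt, (stCol_symm k w v).trans h.2⟩
  have := (Finset.card_le_card hsub).trans (Finset.card_union_le _ _)
  omega


/-- For `m ≥ 2`, `q ≥ m` a prime power, and `n ≥ 3q²`, there exist an `m`-partite graph
`G` (a finite graph with a proper partition `p` into `m` parts, each of size at most
`3q²`) of maximum degree at most `q + 2m`, and a globally `⌈n/(q²+q)⌉`-bounded symmetric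
edge-coloring `c` of the complete `m`-partite graph `K_{m⊗n}` (on `Fin m × Fin n`, edges
between distinct parts; the global bound is stated for ordered pairs, whence the
factor 2), such that `K_{m⊗n}` contains no properly colored copy of `G`. -/
theorem stmt15 (m q n : ℕ) (hm : 2 ≤ m) (hq : IsPrimePow q) (hqm : m ≤ q)
    (hn : 3 * q ^ 2 ≤ n) :
    ∃ (W : Type) (_ : Fintype W) (G : SimpleGraph W) (p : W → Fin m),
      (∀ u v, G.Adj u v → p u ≠ p v) ∧
      (∀ i : Fin m, (p ⁻¹' {i}).ncard ≤ 3 * q ^ 2) ∧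
      (∀ v, (G.neighborSet v).ncard ≤ q + 2 * m) ∧
      ∃ c : (Fin m × Fin n) → (Fin m × Fin n) → ℕ,
        (∀ v w, c v w = c w v) ∧
        (∀ col : ℕ, (Finset.univ.filter (fun e : (Fin m × Fin n) × (Fin m × Fin n) =>
            e.1.1 ≠ e.2.1 ∧ c e.1 e.2 = col)).card
          ≤ 2 * ((n + (q ^ 2 + q) - 1) / (q ^ 2 + q))) ∧
        ¬ ∃ f : W → Fin m × Fin n, Function.Injective f ∧
            (∀ u v, G.Adj u v → (f u).1 ≠ (f v).1) ∧
            (∀ u v w, G.Adj u v → G.Adj v w → u ≠ w →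
              c (f u) (f v) ≠ c (f v) (f w)) := by
  obtain ⟨m', rfl⟩ : ∃ m', m = m' + 1 := ⟨m - 1, by omega⟩
  have hm' : 1 ≤ m' := by omega
  have hq2 : 2 ≤ q := by omega
  have hP := plane_exists q hq
  set M := q ^ 2 + q with hM
  obtain ⟨I, hIs, hIc, hId⟩ := hP
  have hMq : q ^ 2 + 2 ≤ M := by omega
  have hqq : 2 * q ≤ q ^ 2 := by nlinarith
  set k := (n + M - 1) / M with hk
  have hk0 : 0 < k := Nat.div_pos (by omega) (by omega)
  have hkn : n ≤ M * k := by
    have h1 := Nat.div_add_mod (n + M - 1) M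
    have h2 := Nat.mod_lt (n + M - 1) (show M > 0 by omega)
    rw [← hk] at h1
    omega
  obtain ⟨h, hh⟩ : ∃ h, h = (M + 1) / 2 := ⟨_, rfl⟩
  have hsymm : ∀ u v : Bool × (Fin (M+1) ⊕ (Fin h × Fin m')), stAdj I u v → stAdj I v u := by
    rintro ⟨b, i | ⟨j, s⟩⟩ ⟨b', i' | ⟨j', s'⟩⟩ hA
    · exact ⟨hA.1.symm, hIs _ _ hA.2⟩
    · exact ⟨hA.1.symm, hA.2⟩
    · exact ⟨hA.1.symm, hA.2⟩
    · exact ⟨hA.1.symm, hA.2.1.symm, hA.2.2.symm⟩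
  refine ⟨Bool × (Fin (M+1) ⊕ (Fin h × Fin m')), inferInstance,
    { Adj := stAdj I, symm := ⟨hsymm⟩, loopless := ⟨fun v hv => stPart_adj hm' I v v hv rfl⟩ },
    stPart hm', stPart_adj hm' I, ?_, ?_, stCol k, stCol_symm k, stCol_card k hk0, ?_⟩
  · intro a
    refine (stPart_card hm' (by omega) a).trans ?_
    omega
  · intro v
    exact stDeg hm' I hId hq2 v
  · rintro ⟨f, hinj, hf, hc⟩
    replace hf : ∀ u v, stAdj I u v → (f u).1 ≠ (f v).1 := hf
    replace hc : ∀ u v w, stAdj I u v → stAdj I v w → u ≠ w →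
      stCol k (f u) (f v) ≠ stCol k (f v) (f w) := hc
    have hs := stSame hh I f hf
    have key : ∀ b : Bool, ∃ i j : Fin (M+1), (f (b, Sum.inl j)).1 < (f (!b, Sum.inl i)).1 → False := by
      intro b
      have hpig := Fintype.exists_ne_map_eq_of_card_lt
        (fun i : Fin (M+1) => (⟨(f (!b, Sum.inl i)).2.1 / k, by
          apply Nat.div_lt_of_lt_mul
          rw [mul_comm]
          exact lt_of_lt_of_le (f (!b, Sum.inl i)).2.2 hkn⟩ : Fin M)) (by simp)
      obtain ⟨i, i', hne, heq⟩ := hpig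
      simp only [Fin.mk.injEq] at heq
      obtain ⟨j, hj, hj'⟩ := hIc i i' hne
      refine ⟨i, j, fun hlt => ?_⟩
      have hlt' : (f (b, Sum.inl j)).1 < (f (!b, Sum.inl i')).1 := by rw [hs (!b) i' i]; exact hlt
      refine hc (!b, Sum.inl i) (b, Sum.inl j) (!b, Sum.inl i') ⟨by simp, hj⟩
        ⟨by simp, hIs _ _ hj'⟩ (by simpa using hne) ?_
      rw [stCol_symm, stCol, if_pos hlt, stCol, if_pos hlt', heq, hs (!b) i' i]
    obtain ⟨i0, j0, h0⟩ := key false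
    obtain ⟨i1, j1, h1⟩ := key true
    have hex : ∃ i j, I i j := by
      obtain ⟨j, hj, -⟩ := hIc ⟨0, by omega⟩ ⟨1, by omega⟩ (by simp)
      exact ⟨_, _, hj⟩
    obtain ⟨i, j, hij⟩ := hex
    have hne := hf (false, Sum.inl i) (true, Sum.inl j) ⟨by simp, hij⟩
    rcases lt_or_gt_of_ne hne with hlt | hlt
    · exact h0 (by rw [hs false j0 i]; exact (hs true i0 j) ▸ hlt)
    · exact h1 (by rw [hs true j1 j]; exact (hs false i1 i) ▸ hlt)
end

section
/- Suppose c is a globally (n/(110Δ²))-bounded edge-coloring of the complete m-partite graph K_{m⊗n}, and G is an m-partite graph with parts U₁, …, U_m of sizes at most n and maximum degree Δ. Then K_{m⊗n} contains a rainbow copy of G; moreover the copy can be chosen so that U_i is mapped into the i-th part of K_{m⊗n} for every i. -/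
open Finset in
open scoped Classical in
theorem lll_aux {Ω ι : Type*} (X : Finset Ω) (ev : ι → Ω → Prop)
    (conf : ι → ι → Prop) (p : ι → ℚ) (Bs : Finset ι) (hp0 : ∀ i, 0 ≤ p i)
    (H : ∀ A ∈ Bs, ∀ S ⊆ Bs, (∀ B ∈ S, ¬ conf A B) →
      ((X.filter (fun f => ev A f ∧ ∀ B ∈ S, ¬ ev B f)).card : ℚ) ≤
        p A * (X.filter (fun f => ∀ B ∈ S, ¬ ev B f)).card)
    (hs : ∀ A ∈ Bs, ∑ B ∈ Bs.filter (fun B => conf A B), p B ≤ 1 / 4) :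
    ∀ k : ℕ, ∀ S ⊆ Bs, S.card = k → ∀ A ∈ Bs,
      ((X.filter (fun f => ev A f ∧ ∀ B ∈ S, ¬ ev B f)).card : ℚ) ≤
        2 * p A * (X.filter (fun f => ∀ B ∈ S, ¬ ev B f)).card := by
  intro k
  induction k using Nat.strong_induction_on with
  | _ k ih =>
    intro S hS hk A hA
    set S1 := S.filter (fun B => conf A B) with hS1
    set S2 := S.filter (fun B => ¬ conf A B) with hS2
    have hS2S : S2 ⊆ S := filter_subset _ _
    have h2 := H A hA S2 (hS2S.trans hS) (by intro B hB; exact (mem_filter.1 hB).2)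
    have hle : ((X.filter (fun f => ev A f ∧ ∀ B ∈ S, ¬ ev B f)).card : ℚ) ≤
        (X.filter (fun f => ev A f ∧ ∀ B ∈ S2, ¬ ev B f)).card := by
      norm_cast
      apply card_le_card
      intro f hf
      rw [mem_filter] at hf ⊢
      exact ⟨hf.1, hf.2.1, fun B hB => hf.2.2 B (hS2S hB)⟩
    have hhalf : ((X.filter (fun f => ∀ B ∈ S2, ¬ ev B f)).card : ℚ) ≤
        2 * (X.filter (fun f => ∀ B ∈ S, ¬ ev B f)).card := by
      by_cases hne : S1 = ∅
      · have : S2 = S := by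
          rw [hS2]
          apply filter_true_of_mem
          intro B hB hc
          have : B ∈ S1 := mem_filter.2 ⟨hB, hc⟩
          rw [hne] at this
          simp at this
        rw [this]
        have : (0:ℚ) ≤ ((X.filter (fun f => ∀ B ∈ S, ¬ ev B f)).card : ℚ) := by positivity
        linarith
      · have hlt : S2.card < k := by
          rw [← hk]
          apply card_lt_card
          refine ⟨hS2S, fun hh => hne ?_⟩
          rw [eq_empty_iff_forall_notMem]
          intro B hB
          have := hh (mem_filter.1 hB).1
          exact (mem_filter.1 this).2 (mem_filter.1 hB).2
        have hcov : (X.filter (fun f => ∀ B ∈ S2, ¬ ev B f)) ⊆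
            (X.filter (fun f => ∀ B ∈ S, ¬ ev B f)) ∪
            S1.biUnion (fun A' => X.filter (fun f => ev A' f ∧ ∀ B ∈ S2, ¬ ev B f)) := by
          intro f hf
          rw [mem_filter] at hf
          rw [mem_union, mem_filter, mem_biUnion]
          by_cases hx : ∃ B ∈ S, ev B f
          · obtain ⟨B, hB, hBf⟩ := hx
            right
            refine ⟨B, mem_filter.2 ⟨hB, ?_⟩, mem_filter.2 ⟨hf.1, hBf, hf.2⟩⟩
            by_contra hc
            exact hf.2 B (mem_filter.2 ⟨hB, hc⟩) hBf
          · left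
            exact ⟨hf.1, fun B hB hBf => hx ⟨B, hB, hBf⟩⟩
        have h3 : ((X.filter (fun f => ∀ B ∈ S2, ¬ ev B f)).card : ℚ) ≤
            (X.filter (fun f => ∀ B ∈ S, ¬ ev B f)).card +
            ∑ A' ∈ S1, ((X.filter (fun f => ev A' f ∧ ∀ B ∈ S2, ¬ ev B f)).card : ℚ) := by
          have := (card_le_card hcov).trans ((card_union_le _ _).trans
            (Nat.add_le_add_left card_biUnion_le _))
          exact_mod_cast this
        have h4 : ∑ A' ∈ S1, ((X.filter (fun f => ev A' f ∧ ∀ B ∈ S2, ¬ ev B f)).card : ℚ) ≤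
            ∑ A' ∈ S1, 2 * p A' * (X.filter (fun f => ∀ B ∈ S2, ¬ ev B f)).card := by
          apply sum_le_sum
          intro A' hA'
          exact ih _ hlt S2 (hS2S.trans hS) rfl A' (hS (mem_filter.1 hA').1)
        have h5 : ∑ A' ∈ S1, p A' ≤ 1 / 4 := by
          refine le_trans (sum_le_sum_of_subset_of_nonneg ?_ (fun i _ _ => hp0 i)) (hs A hA)
          exact filter_subset_filter _ hS
        rw [← sum_mul, ← mul_sum] at h4
        have h6 : (0:ℚ) ≤ ((X.filter (fun f => ∀ B ∈ S2, ¬ ev B f)).card : ℚ) := by positivity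
        nlinarith
    have := mul_le_mul_of_nonneg_left hhalf (hp0 A)
    linarith

open Finset in
open scoped Classical in
theorem lll {Ω ι : Type*} (X : Finset Ω) (ev : ι → Ω → Prop)
    (conf : ι → ι → Prop) (p : ι → ℚ) (Bs : Finset ι) (hX : X.Nonempty) (hp0 : ∀ i, 0 ≤ p i)
    (hp : ∀ i ∈ Bs, p i < 1 / 2)
    (H : ∀ A ∈ Bs, ∀ S ⊆ Bs, (∀ B ∈ S, ¬ conf A B) →
      ((X.filter (fun f => ev A f ∧ ∀ B ∈ S, ¬ ev B f)).card : ℚ) ≤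
        p A * (X.filter (fun f => ∀ B ∈ S, ¬ ev B f)).card)
    (hs : ∀ A ∈ Bs, ∑ B ∈ Bs.filter (fun B => conf A B), p B ≤ 1 / 4) :
    ∃ f ∈ X, ∀ B ∈ Bs, ¬ ev B f := by
  have key := lll_aux X ev conf p Bs hp0 H hs
  have : ∀ S : Finset ι, S ⊆ Bs → 0 < (X.filter (fun f => ∀ B ∈ S, ¬ ev B f)).card := by
    intro S
    induction S using Finset.induction_on with
    | empty => intro _; simpa using hX
    | insert A S hAS ih =>
      intro hS
      have h1 := ih ((subset_insert _ _).trans hS)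
      have hA := hS (mem_insert_self A S)
      have h2 := key _ S ((subset_insert _ _).trans hS) rfl A hA
      by_contra h0
      have h0 : X.filter (fun f => ∀ B ∈ insert A S, ¬ ev B f) = ∅ := by
        rw [← card_eq_zero]; omega
      have h3 : (X.filter (fun f => ∀ B ∈ S, ¬ ev B f)) ⊆
          (X.filter (fun f => ev A f ∧ ∀ B ∈ S, ¬ ev B f)) := by
        intro f hf
        rw [mem_filter] at hf ⊢
        refine ⟨hf.1, ?_, hf.2⟩
        by_contra hA'
        have : f ∈ X.filter (fun f => ∀ B ∈ insert A S, ¬ ev B f) := by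
          rw [mem_filter]
          refine ⟨hf.1, ?_⟩
          intro B hB
          rcases mem_insert.1 hB with rfl | hB
          · exact hA'
          · exact hf.2 B hB
        rw [h0] at this
        simp at this
      have h4 : ((X.filter (fun f => ∀ B ∈ S, ¬ ev B f)).card : ℚ) ≤
          (X.filter (fun f => ev A f ∧ ∀ B ∈ S, ¬ ev B f)).card := by
        exact_mod_cast card_le_card h3
      have h5 := hp A hA
      have h6 : (0:ℚ) < (X.filter (fun f => ∀ B ∈ S, ¬ ev B f)).card := by exact_mod_cast h1
      nlinarith
  have h := this Bs (subset_refl _)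
  obtain ⟨f, hf⟩ := card_pos.1 h
  rw [mem_filter] at hf
  exact ⟨f, hf.1, hf.2⟩

open scoped Classical in
/-- part-preserving injections -/
noncomputable def PInj {W : Type*} [Fintype W] {m n : ℕ} (part : W → Fin m) :
    Finset (W → Fin m × Fin n) :=
  Finset.univ.filter (fun f => Function.Injective f ∧ ∀ w, (f w).1 = part w)

def Sat {W V : Type*} (A : Finset (W × V)) (f : W → V) : Prop := ∀ p ∈ A, f p.1 = p.2

def Conf {W V : Type*} (A B : Finset (W × V)) : Prop :=
  ∃ p ∈ A, ∃ q ∈ B, ¬ (p.1 = q.1 ↔ p.2 = q.2)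

open Finset in
open scoped Classical in
theorem neg_dep {W : Type*} [Fintype W] {m n : ℕ} (part : W → Fin m)
    (S : Finset (Finset (W × (Fin m × Fin n)))) (r : ℕ)
    (A : Finset (W × (Fin m × Fin n))) :
    A.card ≤ r + 1 → (∀ B ∈ S, ¬ Conf A B) →
      ((PInj part).filter (fun f => Sat A f ∧ ∀ B ∈ S, ¬ Sat B f)).card * (n - r) ^ A.card ≤
        ((PInj (n := n) part).filter (fun f => ∀ B ∈ S, ¬ Sat B f)).card := by
  induction A using Finset.induction_on with
  | empty => intro _ _; simp [Sat]
  | insert p A hpA ih =>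
    obtain ⟨u, x⟩ := p
    intro hr hS
    rw [card_insert_of_notMem hpA] at hr ⊢
    refine le_trans ?_ (ih (by omega) ?_)
    swap
    · rintro B hB ⟨p, hp, q, hq, h⟩
      exact hS B hB ⟨p, mem_insert_of_mem hp, q, hq, h⟩
    rw [pow_succ, mul_comm ((n - r) ^ A.card), ← mul_assoc]
    apply Nat.mul_le_mul_right
    set Y : Finset (Fin m × Fin n) :=
      (univ.filter (fun y : Fin m × Fin n => y.1 = part u)) \ A.image Prod.snd with hY
    have hYc : n - r ≤ Y.card := by
      have h1 : (univ.filter (fun y : Fin m × Fin n => y.1 = part u)).card = n := by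
        have : (univ.filter (fun y : Fin m × Fin n => y.1 = part u)) =
          univ.image (fun j : Fin n => (part u, j)) := by
          ext ⟨a, b⟩; simp [eq_comm]
        rw [this, card_image_of_injective _ (by intro a b; simp)]
        simp
      have h2 : _ - _ ≤ Y.card := le_card_sdiff (A.image Prod.snd)
        (univ.filter (fun y : Fin m × Fin n => y.1 = part u))
      rw [h1] at h2
      have h3 : (A.image Prod.snd).card ≤ A.card := card_image_le
      omega
    refine le_trans (Nat.mul_le_mul_left _ hYc) ?_
    rw [← card_product]
    apply card_le_card_of_injOn (fun q => (fun w => Equiv.swap x q.2 (q.1 w)))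
    · rintro ⟨f, y⟩ hq
      rw [mem_coe, mem_product, mem_filter, PInj, mem_filter] at hq
      obtain ⟨⟨⟨-, hinj, hpart⟩, hsat, hav⟩, hy⟩ := hq
      simp only at hinj hpart hsat hav hy
      rw [hY, mem_sdiff, mem_filter] at hy
      obtain ⟨⟨-, hy1⟩, hy2⟩ := hy
      have hfu : f u = x := hsat (u, x) (mem_insert_self _ _)
      have hx1 : x.1 = part u := by rw [← hfu]; exact hpart u
      rw [mem_coe, mem_filter, PInj, mem_filter]
      refine ⟨⟨mem_univ _, (Equiv.injective _).comp hinj, ?_⟩, ?_, ?_⟩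
      · intro w
        rw [← hpart w]
        simp only
        rw [Equiv.swap_apply_def]
        split_ifs with h1 h2
        · rw [h1, hy1, hx1]
        · rw [h2, hy1, hx1]
        · rfl
      · rintro ⟨w, z⟩ hp
        have hz : f w = z := hsat (w, z) (mem_insert_of_mem hp)
        simp only
        rw [hz]
        apply Equiv.swap_apply_of_ne_of_ne
        · intro h
          apply hpA
          have : w = u := hinj (by rw [hz, hfu, h])
          rw [← this, ← h]; exact hp
        · intro h
          exact hy2 (mem_image.2 ⟨(w, z), hp, h⟩)
      · intro B hB hBs
        apply hav B hB
        rintro ⟨w, z⟩ hwz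
        have h1 := hBs (w, z) hwz
        simp only at h1 ⊢
        have hnc : ∀ p ∈ insert (u, x) A, (p.1 = w ↔ p.2 = z) := by
          intro p hp
          by_contra hc
          exact hS B hB ⟨p, hp, (w, z), hwz, hc⟩
        by_cases hzx : x = z
        · have := (hnc (u, x) (mem_insert_self _ _)).2 hzx
          simp only at this
          rw [← this, hfu, hzx]
        · have hwu : u ≠ w := fun h => hzx ((hnc (u, x) (mem_insert_self _ _)).1 h)
          have hzy : z ≠ y := by
            intro h
            have h2 : Equiv.swap x y (f w) = Equiv.swap x y x := by
              rw [h1, h, Equiv.swap_apply_left]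
            have := (Equiv.injective _) h2
            rw [← hfu] at this
            exact hwu (hinj this).symm
          have : f w = Equiv.swap x y z := by rw [← h1, Equiv.swap_apply_self]
          rw [this]
          exact Equiv.swap_apply_of_ne_of_ne (Ne.symm hzx) hzy
    · rintro ⟨f, y⟩ hq ⟨f', y'⟩ hq' heq
      rw [mem_coe, mem_product, mem_filter] at hq hq'
      have hfu : f u = x := hq.1.2.1 (u, x) (mem_insert_self _ _)
      have hfu' : f' u = x := hq'.1.2.1 (u, x) (mem_insert_self _ _)
      have h1 := congrFun heq u
      simp only [hfu, hfu', Equiv.swap_apply_left] at h1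
      subst h1
      have : f = f' := by
        funext w
        exact (Equiv.injective _) (congrFun heq w)
      rw [this]

theorem PInj_nonempty {W : Type*} [Fintype W] {m n : ℕ} (part : W → Fin m)
    (hsize : ∀ i : Fin m, (Finset.univ.filter (fun w => part w = i)).card ≤ n) :
    (PInj (n := n) part).Nonempty := by
  classical
  have : ∀ i : Fin m, ∃ g : {w // part w = i} → Fin n, Function.Injective g := by
    intro i
    have : Fintype.card {w // part w = i} ≤ Fintype.card (Fin n) := by
      rw [Fintype.card_subtype, Fintype.card_fin]; exact hsize i
    obtain ⟨g⟩ := Function.Embedding.nonempty_of_card_le this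
    exact ⟨g, g.injective⟩
  choose g hg using this
  refine ⟨fun w => (part w, g (part w) ⟨w, rfl⟩), ?_⟩
  rw [PInj, Finset.mem_filter]
  refine ⟨Finset.mem_univ _, ?_, fun _ => rfl⟩
  intro a b hab
  rw [Prod.mk.injEq] at hab
  obtain ⟨h1, h2⟩ := hab
  have h3 : ∀ i (ha : part a = i) (hb : part b = i), g i ⟨a, ha⟩ = g i ⟨b, hb⟩ → a = b := by
    intro i ha hb h
    have := hg i h
    simpa using this
  apply h3 (part b) h1 rfl
  rw [← h2]
  have h4 : ∀ i j (_ : i = j) (hi : part a = i) (hj : part a = j),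
      g i ⟨a, hi⟩ = g j ⟨a, hj⟩ := by
    intro i j hij hi hj
    subst hij
    rfl
  exact h4 _ _ h1.symm _ _

section counting
set_option linter.unusedSectionVars false
open Finset
open scoped Classical

variable {W : Type*} [Fintype W] {m n Δ K : ℕ} (G : SimpleGraph W) (part : W → Fin m)
  (c : (Fin m × Fin n) → (Fin m × Fin n) → ℕ)

def R4 (B : Finset (W × (Fin m × Fin n))) (a b a' b' : W) (x y x' y' : Fin m × Fin n) : Prop :=
  G.Adj a b ∧ G.Adj a' b' ∧ a ≠ a' ∧ a ≠ b' ∧ b ≠ a' ∧ b ≠ b' ∧ x.1 = part a ∧ y.1 = part b ∧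
  x'.1 = part a' ∧ y'.1 = part b' ∧ c x y = c x' y' ∧ B = {(a, x), (b, y), (a', x'), (b', y')}

def R3 (B : Finset (W × (Fin m × Fin n))) (a b b' : W) (x y y' : Fin m × Fin n) : Prop :=
  G.Adj a b ∧ G.Adj a b' ∧ b ≠ b' ∧ x.1 = part a ∧ y.1 = part b ∧
  y'.1 = part b' ∧ c x y = c x y' ∧ B = {(a, x), (b, y), (b', y')}

def I4 (B : Finset (W × (Fin m × Fin n))) : Prop :=
  ∃ a b a' b' x y x' y', R4 G part c B a b a' b' x y x' y'

def I3 (B : Finset (W × (Fin m × Fin n))) : Prop :=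
  ∃ a b b' x y y', R3 G part c B a b b' x y y'

noncomputable def NN (v : W) : Finset W := univ.filter (fun w => G.Adj v w)
noncomputable def UU (i : Fin m) : Finset W := univ.filter (fun w => part w = i)
noncomputable def PP (n : ℕ) (i : Fin m) : Finset (Fin m × Fin n) := univ.filter (fun w => w.1 = i)
noncomputable def HH (col : ℕ) : Finset ((Fin m × Fin n) × (Fin m × Fin n)) :=
  univ.filter (fun e => e.1.1 < e.2.1 ∧ c e.1 e.2 = col)
noncomputable def DD (x : Fin m × Fin n) (col : ℕ) : Finset (Fin m × Fin n) :=
  univ.filter (fun y => x.1 ≠ y.1 ∧ c x y = col)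

theorem PP_card (i : Fin m) : (PP n i).card = n := by
  have : PP n i = univ.image (fun j : Fin n => (i, j)) := by
    ext ⟨a, b⟩; simp [PP, eq_comm]
  rw [this, card_image_of_injective _ (by intro a b; simp)]
  simp

variable {G part c}

theorem R4.sw1 (hsym : ∀ v w, c v w = c w v) {B a b a' b' x y x' y'}
    (h : R4 G part c B a b a' b' x y x' y') : R4 G part c B b a a' b' y x x' y' := by
  obtain ⟨h1, h2, h3, h4, h5, h6, h7, h8, h9, h10, h11, h12⟩ := h
  refine ⟨h1.symm, h2, h5, h6, h3, h4, h8, h7, h9, h10, by rw [hsym y x, h11], ?_⟩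
  rw [h12]; ext p; simp only [mem_insert, mem_singleton]; tauto

theorem R4.sw {B a b a' b' x y x' y'}
    (h : R4 G part c B a b a' b' x y x' y') : R4 G part c B a' b' a b x' y' x y := by
  obtain ⟨h1, h2, h3, h4, h5, h6, h7, h8, h9, h10, h11, h12⟩ := h
  refine ⟨h2, h1, h3.symm, h5.symm, h4.symm, h6.symm, h9, h10, h7, h8, h11.symm, ?_⟩
  rw [h12]; ext p; simp only [mem_insert, mem_singleton]; tauto

theorem R3.sw {B a b b' x y y'}
    (h : R3 G part c B a b b' x y y') : R3 G part c B a b' b x y' y := by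
  obtain ⟨h1, h2, h3, h4, h5, h6, h7, h8⟩ := h
  refine ⟨h2, h1, h3.symm, h4, h6, h5, h7.symm, ?_⟩
  rw [h8]; ext p; simp only [mem_insert, mem_singleton]; tauto

theorem R4.orient (hsym : ∀ v w, c v w = c w v) (hind : ∀ u v, G.Adj u v → part u ≠ part v)
    {B a b a' b' x y x' y'}
    (h : R4 G part c B a b a' b' x y x' y') :
    ∃ a' b' x' y', R4 G part c B a b a' b' x y x' y' ∧ x'.1 < y'.1 := by
  have hne : x'.1 ≠ y'.1 := by
    obtain ⟨h1, h2, h3, h4, h5, h6, h7, h8, h9, h10, h11, h12⟩ := h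
    rw [h9, h10]; exact hind _ _ h2
  rcases lt_or_gt_of_ne hne with h0 | h0
  · exact ⟨_, _, _, _, h, h0⟩
  · exact ⟨_, _, _, _, (h.sw.sw1 hsym).sw, h0⟩

theorem I4.norm (hsym : ∀ v w, c v w = c w v) (hind : ∀ u v, G.Adj u v → part u ≠ part v)
    {B u t} (h : I4 G part c B) (hu : (u, t) ∈ B) :
    ∃ b a' b' y x' y', R4 G part c B u b a' b' t y x' y' ∧ x'.1 < y'.1 := by
  obtain ⟨a, b, a', b', x, y, x', y', h⟩ := h
  have hB := h.2.2.2.2.2.2.2.2.2.2.2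
  rw [hB] at hu
  simp only [mem_insert, mem_singleton, Prod.mk.injEq] at hu
  rcases hu with ⟨rfl, rfl⟩ | ⟨rfl, rfl⟩ | ⟨rfl, rfl⟩ | ⟨rfl, rfl⟩
  · obtain ⟨_, _, _, _, h⟩ := h.orient hsym hind
    exact ⟨_, _, _, _, _, _, h⟩
  · obtain ⟨_, _, _, _, h⟩ := (h.sw1 hsym).orient hsym hind
    exact ⟨_, _, _, _, _, _, h⟩
  · obtain ⟨_, _, _, _, h⟩ := h.sw.orient hsym hind
    exact ⟨_, _, _, _, _, _, h⟩
  · obtain ⟨_, _, _, _, h⟩ := (h.sw.sw1 hsym).orient hsym hind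
    exact ⟨_, _, _, _, _, _, h⟩

theorem I3.norm {B u t} (h : I3 G part c B) (hu : (u, t) ∈ B) :
    (∃ b b' y y', R3 G part c B u b b' t y y') ∨ (∃ a b' x y', R3 G part c B a u b' x t y') := by
  obtain ⟨a, b, b', x, y, y', h⟩ := h
  have hB := h.2.2.2.2.2.2.2
  rw [hB] at hu
  simp only [mem_insert, mem_singleton, Prod.mk.injEq] at hu
  rcases hu with ⟨rfl, rfl⟩ | ⟨rfl, rfl⟩ | ⟨rfl, rfl⟩
  · exact Or.inl ⟨_, _, _, _, h⟩
  · exact Or.inr ⟨_, _, _, _, h⟩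
  · exact Or.inr ⟨_, _, _, _, h.sw⟩

theorem bu {α β : Type*} [DecidableEq β] {s : Finset α} {f : α → Finset β} {k l : ℕ}
    (hs : s.card ≤ k) (h : ∀ a ∈ s, (f a).card ≤ l) : (s.biUnion f).card ≤ k * l :=
  (card_biUnion_le_card_mul s f l h).trans (Nat.mul_le_mul_right _ hs)

noncomputable def FF {α : Type*} [Fintype α] (P : α → Prop) : Finset α := univ.filter P

theorem mem_FF {α : Type*} [Fintype α] {P : α → Prop} {a : α} : a ∈ FF P ↔ P a := by
  simp [FF]

theorem count4 (hsym : ∀ v w, c v w = c w v) (hind : ∀ u v, G.Adj u v → part u ≠ part v)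
    (hN : ∀ v, (NN G v).card ≤ Δ) (hU : ∀ i, (UU part i).card ≤ n)
    (hH : ∀ col, (HH c col).card ≤ K) (u : W) :
    (FF (fun B => I4 G part c B ∧ ∃ t, (u, t) ∈ B)).card ≤
      Δ * (n * (n * (K * (n * Δ)))) := by
  have hsub : (FF (fun B => I4 G part c B ∧ ∃ t, (u, t) ∈ B)) ⊆
    (NN G u).biUnion fun b => (PP n (part u)).biUnion fun x => (PP n (part b)).biUnion fun y =>
    (HH c (c x y)).biUnion fun q => (UU part q.1.1).biUnion fun a' => (NN G a').image fun b' =>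
      {(u, x), (b, y), (a', q.1), (b', q.2)} := by
    intro B hB
    rw [mem_FF] at hB
    obtain ⟨hI, t, ht⟩ := hB
    obtain ⟨b, a', b', y, x', y', ⟨h1, h2, h3, h4, h5, h6, h7, h8, h9, h10, h11, h12⟩, h⟩ :=
      hI.norm hsym hind ht
    simp only [mem_biUnion, mem_image]
    exact ⟨b, by simp [NN, h1], t, by simp [PP, h7], y, by simp [PP, h8], (x', y'),
      by simp [HH, h, h11], a', by simp [UU, h9], b', by simp [NN, h2], h12.symm⟩
  refine (card_le_card hsub).trans ?_
  refine bu (hN _) fun b _ => bu (PP_card _).le fun x _ => bu (PP_card _).le fun y _ =>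
    bu (hH _) fun q _ => bu (hU _) fun a' _ => card_image_le.trans (hN _)

theorem count4' (hsym : ∀ v w, c v w = c w v) (hind : ∀ u v, G.Adj u v → part u ≠ part v)
    (hN : ∀ v, (NN G v).card ≤ Δ) (hU : ∀ i, (UU part i).card ≤ n)
    (hH : ∀ col, (HH c col).card ≤ K) (t : Fin m × Fin n) :
    (FF (fun B => I4 G part c B ∧ ∃ u, (u, t) ∈ B)).card ≤
      n * (Δ * (n * (K * (n * Δ)))) := by
  have hsub : (FF (fun B => I4 G part c B ∧ ∃ u, (u, t) ∈ B)) ⊆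
    (UU part t.1).biUnion fun u => (NN G u).biUnion fun b => (PP n (part b)).biUnion fun y =>
    (HH c (c t y)).biUnion fun q => (UU part q.1.1).biUnion fun a' => (NN G a').image fun b' =>
      {(u, t), (b, y), (a', q.1), (b', q.2)} := by
    intro B hB
    rw [mem_FF] at hB
    obtain ⟨hI, u, ht⟩ := hB
    obtain ⟨b, a', b', y, x', y', ⟨h1, h2, h3, h4, h5, h6, h7, h8, h9, h10, h11, h12⟩, h⟩ :=
      hI.norm hsym hind ht
    simp only [mem_biUnion, mem_image]
    exact ⟨u, by simp [UU, h7], b, by simp [NN, h1], y, by simp [PP, h8], (x', y'),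
      by simp [HH, h, h11], a', by simp [UU, h9], b', by simp [NN, h2], h12.symm⟩
  refine (card_le_card hsub).trans ?_
  refine bu (hU _) fun u _ => bu (hN _) fun b _ => bu (PP_card _).le fun y _ =>
    bu (hH _) fun q _ => bu (hU _) fun a' _ => card_image_le.trans (hN _)

theorem count3 (hind : ∀ u v, G.Adj u v → part u ≠ part v)
    (hN : ∀ v, (NN G v).card ≤ Δ)
    (hD : ∀ x col, (DD c x col).card ≤ K) (u : W) :
    (FF (fun B => I3 G part c B ∧ ∃ t, (u, t) ∈ B)).card ≤
      Δ * (Δ * (n * (n * K))) + Δ * (Δ * (n * (n * K))) := by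
  have hsub : (FF (fun B => I3 G part c B ∧ ∃ t, (u, t) ∈ B)) ⊆
    ((NN G u).biUnion fun b => (NN G u).biUnion fun b' => (PP n (part u)).biUnion fun x =>
      (PP n (part b)).biUnion fun y => (DD c x (c x y)).image fun y' =>
      {(u, x), (b, y), (b', y')}) ∪
    ((NN G u).biUnion fun a => (NN G a).biUnion fun b' => (PP n (part a)).biUnion fun x =>
      (PP n (part u)).biUnion fun y => (DD c x (c x y)).image fun y' =>
      {(a, x), (u, y), (b', y')}) := by
    intro B hB
    rw [mem_FF] at hB
    obtain ⟨hI, t, ht⟩ := hB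
    simp only [mem_union, mem_biUnion, mem_image]
    rcases hI.norm ht with ⟨b, b', y, y', h1, h2, h3, h4, h5, h6, h7, h8⟩ |
      ⟨a, b', x, y', h1, h2, h3, h4, h5, h6, h7, h8⟩
    · left
      exact ⟨b, by simp [NN, h1], b', by simp [NN, h2], t, by simp [PP, h4], y, by simp [PP, h5],
        y', by simp [DD, h7, h4, h6, hind _ _ h2], h8.symm⟩
    · right
      exact ⟨a, by simp [NN, h1.symm], b', by simp [NN, h2], x, by simp [PP, h4], t,
        by simp [PP, h5], y', by simp [DD, h7, h4, h6, hind _ _ h2], h8.symm⟩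
  refine (card_le_card hsub).trans ((card_union_le _ _).trans (Nat.add_le_add ?_ ?_))
  · exact bu (hN _) fun b _ => bu (hN _) fun b' _ => bu (PP_card _).le fun y _ =>
      bu (PP_card _).le fun y _ => card_image_le.trans (hD _ _)
  · exact bu (hN _) fun b _ => bu (hN _) fun b' _ => bu (PP_card _).le fun y _ =>
      bu (PP_card _).le fun y _ => card_image_le.trans (hD _ _)

theorem count3' (hind : ∀ u v, G.Adj u v → part u ≠ part v)
    (hN : ∀ v, (NN G v).card ≤ Δ) (hU : ∀ i, (UU part i).card ≤ n)
    (hD : ∀ x col, (DD c x col).card ≤ K) (t : Fin m × Fin n) :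
    (FF (fun B => I3 G part c B ∧ ∃ u, (u, t) ∈ B)).card ≤
      n * (Δ * (Δ * (n * K))) + n * (Δ * (Δ * (n * K))) := by
  have hsub : (FF (fun B => I3 G part c B ∧ ∃ u, (u, t) ∈ B)) ⊆
    ((UU part t.1).biUnion fun u => (NN G u).biUnion fun b => (NN G u).biUnion fun b' =>
      (PP n (part b)).biUnion fun y => (DD c t (c t y)).image fun y' =>
      {(u, t), (b, y), (b', y')}) ∪
    ((UU part t.1).biUnion fun u => (NN G u).biUnion fun a => (NN G a).biUnion fun b' =>
      (PP n (part a)).biUnion fun x => (DD c x (c x t)).image fun y' =>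
      {(a, x), (u, t), (b', y')}) := by
    intro B hB
    rw [mem_FF] at hB
    obtain ⟨hI, u, ht⟩ := hB
    simp only [mem_union, mem_biUnion, mem_image]
    rcases hI.norm ht with ⟨b, b', y, y', h1, h2, h3, h4, h5, h6, h7, h8⟩ |
      ⟨a, b', x, y', h1, h2, h3, h4, h5, h6, h7, h8⟩
    · left
      exact ⟨u, by simp [UU, h4], b, by simp [NN, h1], b', by simp [NN, h2], y, by simp [PP, h5],
        y', by simp [DD, h7, h4, h6, hind _ _ h2], h8.symm⟩
    · right
      exact ⟨u, by simp [UU, h5], a, by simp [NN, h1.symm], b', by simp [NN, h2], x,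
        by simp [PP, h4], y', by simp [DD, h7, h4, h6, hind _ _ h2], h8.symm⟩
  refine (card_le_card hsub).trans ((card_union_le _ _).trans (Nat.add_le_add ?_ ?_))
  · exact bu (hU _) fun b _ => bu (hN _) fun b' _ => bu (hN _) fun y _ =>
      bu (PP_card _).le fun y _ => card_image_le.trans (hD _ _)
  · exact bu (hU _) fun b _ => bu (hN _) fun b' _ => bu (hN _) fun y _ =>
      bu (PP_card _).le fun y _ => card_image_le.trans (hD _ _)

theorem I4.card {B} (h : I4 G part c B) : B.card = 4 := by
  obtain ⟨a, b, a', b', x, y, x', y', h1, h2, h3, h4, h5, h6, h7, h8, h9, h10, h11, h12⟩ := h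
  rw [h12, card_insert_of_notMem, card_insert_of_notMem, card_insert_of_notMem, card_singleton]
  · simp [h2.ne]
  · simp [h5, h6]
  · simp [h1.ne, h3, h4]

theorem I3.card {B} (h : I3 G part c B) : B.card = 3 := by
  obtain ⟨a, b, b', x, y, y', h1, h2, h3, h4, h5, h6, h7, h8⟩ := h
  rw [h8, card_insert_of_notMem, card_insert_of_notMem, card_singleton]
  · simp [h3]
  · simp [h1.ne, h2.ne]

/-- weight of a bad event -/
noncomputable def wt (n : ℕ) (B : Finset (W × (Fin m × Fin n))) : ℚ := (1 / ((n : ℚ) - 3)) ^ B.card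

theorem numeric {C4 C3 : ℕ} (hn : 110 ≤ n) (hK : K * (110 * Δ ^ 2) ≤ n)
    (h4 : C4 ≤ Δ ^ 2 * n ^ 3 * K) (h3 : C3 ≤ 2 * (Δ ^ 2 * n ^ 2 * K)) :
    (C4 : ℚ) * (1 / ((n : ℚ) - 3)) ^ 4 + C3 * (1 / ((n : ℚ) - 3)) ^ 3 ≤ 1 / 32 := by
  have hn' : (110 : ℚ) ≤ n := by exact_mod_cast hn
  have hK' : (K : ℚ) * (110 * Δ ^ 2) ≤ n := by exact_mod_cast hK
  have h4' : (C4 : ℚ) ≤ n ^ 4 / 110 := by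
    have : (C4 : ℚ) ≤ Δ ^ 2 * n ^ 3 * K := by exact_mod_cast h4
    have h := mul_le_mul_of_nonneg_left hK' (by positivity : (0:ℚ) ≤ n ^ 3)
    linarith
  have h3' : (C3 : ℚ) ≤ 2 * (n ^ 3 / 110) := by
    have : (C3 : ℚ) ≤ 2 * (Δ ^ 2 * n ^ 2 * K) := by exact_mod_cast h3
    have h := mul_le_mul_of_nonneg_left hK' (by positivity : (0:ℚ) ≤ n ^ 2)
    linarith
  have hq0 : (0:ℚ) < (n : ℚ) - 3 := by linarith
  have hq : (0:ℚ) ≤ 1 / ((n : ℚ) - 3) := by positivity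
  have hnq : (n : ℚ) * (1 / ((n : ℚ) - 3)) ≤ 110 / 107 := by
    rw [mul_one_div, div_le_div_iff₀ hq0 (by norm_num)]; linarith
  set q := 1 / ((n : ℚ) - 3)
  have e4 : (C4 : ℚ) * q ^ 4 ≤ (110 / 107) ^ 4 / 110 := by
    calc (C4 : ℚ) * q ^ 4 ≤ n ^ 4 / 110 * q ^ 4 := by gcongr
      _ = (n * q) ^ 4 / 110 := by ring
      _ ≤ _ := by gcongr
  have e3 : (C3 : ℚ) * q ^ 3 ≤ 2 * ((110 / 107) ^ 3 / 110) := by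
    calc (C3 : ℚ) * q ^ 3 ≤ 2 * (n ^ 3 / 110) * q ^ 3 := by gcongr
      _ = 2 * ((n * q) ^ 3 / 110) := by ring
      _ ≤ _ := by gcongr
  refine (add_le_add e4 e3).trans ?_
  norm_num

theorem wsum (Q : Finset (W × (Fin m × Fin n)) → Prop) :
    ∑ B ∈ FF (fun B => (I4 G part c B ∨ I3 G part c B) ∧ Q B), wt n B =
    ((FF (fun B => I4 G part c B ∧ Q B)).card : ℚ) * (1 / ((n : ℚ) - 3)) ^ 4 +
    ((FF (fun B => I3 G part c B ∧ Q B)).card : ℚ) * (1 / ((n : ℚ) - 3)) ^ 3 := by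
  have hd : Disjoint (FF (fun B => I4 G part c B ∧ Q B))
      (FF (fun B => I3 G part c B ∧ Q B)) := by
    rw [disjoint_left]
    intro B h1 h2
    have := (mem_FF.1 h1).1.card
    have := (mem_FF.1 h2).1.card
    omega
  have he : FF (fun B => (I4 G part c B ∨ I3 G part c B) ∧ Q B) =
      (FF (fun B => I4 G part c B ∧ Q B)) ∪
      (FF (fun B => I3 G part c B ∧ Q B)) := by
    ext B; simp only [mem_FF, mem_union]; tauto
  rw [he, sum_union hd]
  congr 1
  · rw [sum_congr rfl (g := fun _ => (1 / ((n : ℚ) - 3)) ^ 4), sum_const, nsmul_eq_mul]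
    intro B hB
    rw [wt, (mem_FF.1 hB).1.card]
  · rw [sum_congr rfl (g := fun _ => (1 / ((n : ℚ) - 3)) ^ 3), sum_const, nsmul_eq_mul]
    intro B hB
    rw [wt, (mem_FF.1 hB).1.card]

theorem core (hn : 110 ≤ n) (hK : K * (110 * Δ ^ 2) ≤ n)
    (hsym : ∀ v w, c v w = c w v) (hind : ∀ u v, G.Adj u v → part u ≠ part v)
    (hN : ∀ v, (NN G v).card ≤ Δ) (hU : ∀ i, (UU part i).card ≤ n)
    (hH : ∀ col, (HH c col).card ≤ K) (hD : ∀ x col, (DD c x col).card ≤ K) :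
    ∃ f ∈ PInj (n := n) part, ∀ B, (I4 G part c B ∨ I3 G part c B) → ¬ Sat B f := by
  have hn' : (110 : ℚ) ≤ n := by exact_mod_cast hn
  have hq0 : (0:ℚ) < (n : ℚ) - 3 := by linarith
  have hw0 : ∀ B : Finset (W × (Fin m × Fin n)), 0 ≤ wt n B := by
    intro B; unfold wt; positivity
  have hcard : ∀ B, (I4 G part c B ∨ I3 G part c B) → B.card ≤ 4 ∧ B.card ≠ 0 := by
    rintro B (h | h)
    · rw [h.card]; simp
    · rw [h.card]; simp
  have := lll (PInj (n := n) part) Sat Conf (wt n)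
    (univ.filter (fun B => I4 G part c B ∨ I3 G part c B)) ?_ hw0 ?_ ?_ ?_
  · obtain ⟨f, hf, h⟩ := this
    exact ⟨f, hf, fun B hB => h B (by simpa using hB)⟩
  · exact PInj_nonempty part (fun i => by convert hU i; unfold UU; congr)
  · intro B hB
    have h := hcard B (by simpa using hB)
    unfold wt
    have h1 : 1 / ((n : ℚ) - 3) ≤ 1 / 107 :=
      one_div_le_one_div_of_le (by norm_num) (by linarith)
    calc (1 / ((n : ℚ) - 3)) ^ B.card ≤ (1 / ((n : ℚ) - 3)) ^ 1 :=
          pow_le_pow_of_le_one (by positivity) (by linarith) (by omega)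
      _ < 1 / 2 := by linarith
  · intro A hA S hS hc
    have h := hcard A (by simpa using hA)
    have h1 := neg_dep part S 3 A h.1 hc
    have h2 : ((n - 3 : ℕ) : ℚ) = (n : ℚ) - 3 := by
      rw [Nat.cast_sub (by omega)]; norm_num
    have h3 : ((((PInj part).filter (fun f => Sat A f ∧ ∀ B ∈ S, ¬ Sat B f)).card : ℕ) : ℚ) *
        ((n : ℚ) - 3) ^ A.card ≤
        ((PInj (n := n) part).filter (fun f => ∀ B ∈ S, ¬ Sat B f)).card := by
      rw [← h2]; exact_mod_cast h1
    unfold wt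
    rw [one_div, inv_pow, inv_mul_eq_div, le_div_iff₀ (by positivity)]
    convert h3
    rfl
  · intro A hA
    have h := hcard A (by simpa using hA)
    have hsub : (univ.filter (fun B => I4 G part c B ∨ I3 G part c B)).filter
        (fun B => Conf A B) ⊆
        (A.biUnion fun p => FF
          (fun B => (I4 G part c B ∨ I3 G part c B) ∧ ∃ t, (p.1, t) ∈ B)) ∪
        (A.biUnion fun p => FF
          (fun B => (I4 G part c B ∨ I3 G part c B) ∧ ∃ u, (u, p.2) ∈ B)) := by
      intro B hB
      simp only [mem_filter, mem_univ, true_and] at hB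
      obtain ⟨hB, p, hp, ⟨w, z⟩, hq, hpq⟩ := hB
      simp only [mem_union, mem_biUnion, mem_FF]
      by_cases h1 : p.1 = w
      · left
        exact ⟨p, hp, hB, z, by rw [h1]; exact hq⟩
      · right
        have h2 : p.2 = z := by
          by_contra h2
          exact hpq ⟨fun h => absurd h h1, fun h => absurd h h2⟩
        exact ⟨p, hp, hB, w, by rw [h2]; exact hq⟩
    have hb : ∀ (s : Finset (W × (Fin m × Fin n)))
        (F : (W × (Fin m × Fin n)) → Finset (Finset (W × (Fin m × Fin n)))),
        (∀ p ∈ s, ∑ B ∈ F p, wt n B ≤ 1 / 32) → ∑ B ∈ s.biUnion F, wt n B ≤ s.card * (1 / 32) := by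
      intro s F hF
      induction s using Finset.induction_on with
      | empty => simp
      | insert p s hp ih =>
        rw [biUnion_insert, card_insert_of_notMem hp]
        have h1 := ih (fun p hp => hF p (mem_insert_of_mem hp))
        have h2 := hF p (mem_insert_self _ _)
        have h3 := sum_union_inter (s₁ := F p) (s₂ := s.biUnion F) (f := wt n)
        have h4 : 0 ≤ ∑ B ∈ F p ∩ s.biUnion F, wt n B := sum_nonneg (fun B _ => hw0 B)
        push_cast
        linarith
    have hA4 : (A.card : ℚ) ≤ 4 := by exact_mod_cast h.1
    have e1 := hb A (fun p => FF
          (fun B => (I4 G part c B ∨ I3 G part c B) ∧ ∃ t, (p.1, t) ∈ B)) (by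
      intro p _
      rw [wsum]
      apply numeric hn hK
      · refine (count4 hsym hind hN hU hH p.1).trans (le_of_eq ?_); ring
      · refine (count3 hind hN hD p.1).trans (le_of_eq ?_); ring)
    have e2 := hb A (fun p => FF
          (fun B => (I4 G part c B ∨ I3 G part c B) ∧ ∃ u, (u, p.2) ∈ B)) (by
      intro p _
      rw [wsum]
      apply numeric hn hK
      · refine (count4' hsym hind hN hU hH p.2).trans (le_of_eq ?_); ring
      · refine (count3' hind hN hU hD p.2).trans (le_of_eq ?_); ring)
    refine (sum_le_sum_of_subset_of_nonneg hsub (fun B _ _ => hw0 B)).trans ?_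
    have h3 := sum_union_inter (s₁ := (A.biUnion fun p => FF
          (fun B => (I4 G part c B ∨ I3 G part c B) ∧ ∃ t, (p.1, t) ∈ B)))
        (s₂ := (A.biUnion fun p => FF
          (fun B => (I4 G part c B ∨ I3 G part c B) ∧ ∃ u, (u, p.2) ∈ B))) (f := wt n)
    have h4 : 0 ≤ ∑ B ∈ (A.biUnion fun p => FF
          (fun B => (I4 G part c B ∨ I3 G part c B) ∧ ∃ t, (p.1, t) ∈ B)) ∩
        (A.biUnion fun p => FF
          (fun B => (I4 G part c B ∨ I3 G part c B) ∧ ∃ u, (u, p.2) ∈ B)), wt n B :=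
      sum_nonneg (fun B _ => hw0 B)
    linarith

theorem half_count (T F : Finset ((Fin m × Fin n) × (Fin m × Fin n)))
    (h1 : T ⊆ F) (h2 : ∀ p ∈ T, p.swap ∈ F) (h3 : ∀ p ∈ T, p.swap ∉ T) :
    2 * T.card ≤ F.card := by
  have hd : Disjoint T (T.image Prod.swap) := by
    rw [disjoint_left]
    intro p hp hp'
    obtain ⟨q, hq, rfl⟩ := mem_image.1 hp'
    exact h3 q hq hp
  have hs : T ∪ T.image Prod.swap ⊆ F := by
    intro p hp
    rcases mem_union.1 hp with hp | hp
    · exact h1 hp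
    · obtain ⟨q, hq, rfl⟩ := mem_image.1 hp
      exact h2 q hq
  have := card_le_card hs
  rw [card_union_of_disjoint hd, card_image_of_injective _ Prod.swap_injective] at this
  omega

end counting

/-- If `c` is a globally `(n/(110Δ²))`-bounded symmetric edge-coloring of the complete
`m`-partite graph `K_{m⊗n}` (vertices `Fin m × Fin n`, edges between distinct parts; the
global bound is stated for ordered pairs, whence the factor 2), and `G` is an
`m`-partite graph with parts of size at most `n` and maximum degree at most `Δ`, then
`K_{m⊗n}` contains a rainbow copy of `G` mapping the `i`-th part of `G` into the `i`-th
part of `K_{m⊗n}`. -/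
theorem stmt18 {W : Type*} [Fintype W] [DecidableEq W] (m n Δ : ℕ) (hn : 5 ≤ n)
    (G : SimpleGraph W) [DecidableRel G.Adj] (part : W → Fin m)
    (hind : ∀ u v, G.Adj u v → part u ≠ part v)
    (hsize : ∀ i : Fin m, (Finset.univ.filter (fun w => part w = i)).card ≤ n)
    (hdeg : ∀ v, G.degree v ≤ Δ)
    (c : (Fin m × Fin n) → (Fin m × Fin n) → ℕ)
    (hsym : ∀ v w, c v w = c w v)
    (hglob : ∀ col : ℕ,
      ((Finset.univ.filter (fun e : (Fin m × Fin n) × (Fin m × Fin n) =>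
        e.1.1 ≠ e.2.1 ∧ c e.1 e.2 = col)).card : ℚ) ≤ 2 * n / (110 * Δ ^ 2)) :
    ∃ f : W → Fin m × Fin n, Function.Injective f ∧ (∀ w, (f w).1 = part w) ∧
      ∀ u v u' v', G.Adj u v → G.Adj u' v' → s(u, v) ≠ s(u', v') →
        c (f u) (f v) ≠ c (f u') (f v') := by
  classical
  have hpi : ∀ f ∈ PInj (n := n) part, Function.Injective f ∧ ∀ w, (f w).1 = part w := by
    intro f hf
    exact (Finset.mem_filter.1 hf).2
  by_cases hE : ∃ u v, G.Adj u v
  swap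
  · obtain ⟨f, hf⟩ := PInj_nonempty (n := n) part (fun i => by convert hsize i)
    refine ⟨f, (hpi f hf).1, (hpi f hf).2, ?_⟩
    intro u v _ _ h
    exact absurd ⟨u, v, h⟩ hE
  obtain ⟨u0, v0, huv⟩ := hE
  have hN : ∀ v, (NN G v).card ≤ Δ := by
    intro v
    refine le_trans (le_of_eq ?_) (hdeg v)
    rw [← SimpleGraph.card_neighborFinset_eq_degree]
    congr 1
    ext w
    simp [NN]
  have hΔ : 0 < Δ := by
    refine lt_of_lt_of_le (Finset.card_pos.2 ⟨v0, ?_⟩) (hN u0)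
    simp [NN, huv]
  have hglob' : ∀ col : ℕ, ∀ T : Finset ((Fin m × Fin n) × (Fin m × Fin n)),
      (∀ p ∈ T, p.1.1 ≠ p.2.1 ∧ c p.1 p.2 = col) → (∀ p ∈ T, p.swap ∉ T) →
      T.card ≤ n / (110 * Δ ^ 2) := by
    intro col T h1 h2
    have h := half_count T (F := Finset.univ.filter (fun e : (Fin m × Fin n) × (Fin m × Fin n) =>
        e.1.1 ≠ e.2.1 ∧ c e.1 e.2 = col)) (fun p hp => by simpa using h1 p hp)
      (fun p hp => by
        have := h1 p hp
        simp only [Finset.mem_filter, Finset.mem_univ, true_and, Prod.fst_swap, Prod.snd_swap]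
        exact ⟨this.1.symm, by rw [hsym]; exact this.2⟩) h2
    have h' := hglob col
    have hpos : (0 : ℚ) < 110 * Δ ^ 2 := by positivity
    rw [le_div_iff₀ hpos] at h'
    have hq : (2 * T.card : ℚ) ≤ ((Finset.univ.filter (fun e : (Fin m × Fin n) × (Fin m × Fin n) =>
        e.1.1 ≠ e.2.1 ∧ c e.1 e.2 = col)).card : ℚ) := by exact_mod_cast h
    have h3 := mul_le_mul_of_nonneg_right hq hpos.le
    rw [Nat.le_div_iff_mul_le (by positivity)]
    have h4 : (T.card : ℚ) * (110 * Δ ^ 2) ≤ n := by linarith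
    exact_mod_cast h4
  have hH : ∀ col, (HH c col).card ≤ n / (110 * Δ ^ 2) := by
    intro col
    apply hglob' col
    · intro p hp
      have := (Finset.mem_filter.1 hp).2
      exact ⟨this.1.ne, this.2⟩
    · intro p hp hp'
      have h1 := (Finset.mem_filter.1 hp).2.1
      have h2 := (Finset.mem_filter.1 hp').2.1
      exact lt_asymm h1 h2
  have hD : ∀ x col, (DD c x col).card ≤ n / (110 * Δ ^ 2) := by
    intro x col
    have := hglob' col ((DD c x col).image (fun y => (x, y))) ?_ ?_
    · rwa [Finset.card_image_of_injective _ (by intro a b; simp)] at this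
    · intro p hp
      obtain ⟨y, hy, rfl⟩ := Finset.mem_image.1 hp
      exact (Finset.mem_filter.1 hy).2
    · intro p hp hp'
      obtain ⟨y, hy, rfl⟩ := Finset.mem_image.1 hp
      obtain ⟨z, hz, h⟩ := Finset.mem_image.1 hp'
      have h1 := (Finset.mem_filter.1 hy).2.1
      simp only [Prod.swap_prod_mk, Prod.mk.injEq] at h
      exact h1 (by rw [h.1])
  have hK : n / (110 * Δ ^ 2) * (110 * Δ ^ 2) ≤ n := Nat.div_mul_le_self _ _
  have hn110 : 110 ≤ n := by
    have z : Fin n := ⟨0, by omega⟩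
    have h1 : 1 ≤ n / (110 * Δ ^ 2) := by
      refine le_trans (Finset.card_pos.2 ⟨(part v0, z), ?_⟩)
        (hD (part u0, z) (c (part u0, z) (part v0, z)))
      simp [DD, hind _ _ huv]
    have h2 : 1 ≤ Δ ^ 2 := Nat.one_le_pow _ _ hΔ
    nlinarith
  obtain ⟨f, hf, hav⟩ := core hn110 hK hsym hind hN (fun i => by unfold UU; convert hsize i) hH hD
  obtain ⟨hinj, hpart⟩ := hpi f hf
  have a3 : ∀ a b b', G.Adj a b → G.Adj a b' → b ≠ b' → c (f a) (f b) ≠ c (f a) (f b') := by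
    intro a b b' h1 h2 h3 h4
    refine hav _ (Or.inr ⟨a, b, b', f a, f b, f b', h1, h2, h3, hpart _, hpart _, hpart _,
      h4, rfl⟩) ?_
    intro p hp
    simp only [Finset.mem_insert, Finset.mem_singleton] at hp
    rcases hp with rfl | rfl | rfl <;> rfl
  refine ⟨f, hinj, hpart, ?_⟩
  intro u v u' v' h1 h2 hne heq
  by_cases e1 : u = u'
  · subst e1
    exact a3 u v v' h1 h2 (fun h => hne (by rw [h])) heq
  by_cases e2 : u = v'
  · subst e2
    exact a3 u v u' h1 h2.symm (fun h => hne (by rw [h, Sym2.eq_swap])) (by rw [heq, hsym])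
  by_cases e3 : v = u'
  · subst e3
    exact a3 v u v' h1.symm h2 (fun h => hne (by rw [h, Sym2.eq_swap])) (by rw [← heq, hsym])
  by_cases e4 : v = v'
  · subst e4
    exact a3 v u u' h1.symm h2.symm (fun h => hne (by rw [h])) (by rw [hsym, heq, hsym])
  refine hav _ (Or.inl ⟨u, v, u', v', f u, f v, f u', f v', h1, h2, e1, e2, e3, e4, hpart _,
    hpart _, hpart _, hpart _, heq, rfl⟩) ?_
  intro p hp
  simp only [Finset.mem_insert, Finset.mem_singleton] at hp
  rcases hp with rfl | rfl | rfl | rfl <;> rfl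
end
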